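/- The Riesz distribution at μ = 0 is the Dirac measure at the origin: Let k > 0 and let R be a family of type-A Riesz distributions. Then for every Schwartz function φ on ℝⁿ, ⟨R_0, φ⟩ = φ(0). -/

import Mathlib

/-!
Write `μ₀ = k(n-1)`. For `a > 0` the value at `μ = μ₀ + a` is
`⟨R_μ, φ⟩ = SL(a)⁻¹ ∫ φ(x) ∏ x_i^{a-1} ω_k(x) dx` over the orthant, where
`SL(a) = d_n(k) ∏_{j<n} Γ(a+jk)` is the Selberg–Laguerre integral `∫ e^{-∑x_i} ∏ x_i^{a-1} ω_k(x) dx`.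
Every identity valid for all these `μ` and entire in `μ` holds at `μ = 0` (`entire_eq_zero`). Hence
`R_0` sees only the values of `φ` on the orthant (`riesz_zero_of_vanish`), and `R_0 φ = 1` if
`φ = e^{-∑x_i}` there (`riesz_zero_exp`).

*The basic identity.* Differentiating `x_i f(x) ∏ x_l^{a-1} ω_k(x)` in `x_i`, integrating, and
symmetrising the singular terms under the transposition `σ_ij` gives
`∫ (a f + x_i ∂_i f + k ∑_{j≠i} (x_i f - x_j f∘σ_ij)/(x_i - x_j)) ∏ x_l^{a-1} ω_k = 0` (`ibp`).
As `ω_k` need not be differentiable across `x_i = x_j`, this is done for the weight with each factor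
`|x_i - x_j|` replaced by `((x_i - x_j)² + ε)^{1/2}`, and then `ε → 0`.

*The Selberg–Laguerre integral.* For `f = ∏_{l∈T} x_l e^{-∑x}` with `i ∉ T` the identity adjoins `i`
to `T` at the cost of a linear factor, so `SL(a+1) = ∏_{j<n}(a+jk) SL(a)` (`SL_succ`). Since `SL` is
log-convex, the Bohr–Mollerup argument (`convex_unique`) determines it up to a constant
(`SL_eq_const`); the constant is found by induction on `n`, because at `a = 1` subtracting the
smallest coordinate from the others reduces the integral to `n - 1` variables (`SL_rec`).

*Vanishing on polynomials.* For `f = p(x) g(∑x_i)`, with `p` a polynomial and `g` smooth and zero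
near `+∞`, the identity continues to `μ = 0`, where `a = -μ₀` (`riesz_step`). It expresses
`R_0(x_i p g')` through terms with the polynomials `p`, `x_i ∂_i p` and the divided differences of
`p`, all of degree `deg p`. Every such `g` is a derivative of another one, so by induction on the
degree and Euler's identity `R_0(p g(∑x)) = 0` for all homogeneous `p` of positive degree
(`riesz_poly`); in degree `1` the constants cancel: `μ₀ - k(n-1) = 0`.

*From polynomials to all Schwartz functions.* Let `φ` be the Fourier transform of a compactly
supported function. Its Taylor series converges to it with all derivatives, uniformly on balls
(`FN_bound`), so `R_0(Gφ) = φ(0) R_0(G)` for `G = g(∑x)` (`riesz_fourier`), with no need to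
know the order of `R_0`. Dilating a cutoff `G` and using that such `φ` are dense gives
`φ₂(0) R_0 φ₁ = φ₁(0) R_0 φ₂` for all Schwartz functions (`riesz_pair`). For `φ₂` take a Schwartz
function equal to `e^{-∑x_i}` on the orthant and to `1` at the origin.
-/

open MeasureTheory Finset

/-- The type-A Dunkl weight `ω_k(x) = ∏_{i<j} |x_i - x_j|^{2k}`. -/
noncomputable def wk (n : ℕ) (k : ℝ) (x : Fin n → ℝ) : ℝ :=
  ∏ i : Fin n, ∏ j ∈ Finset.Ioi i, |x i - x j| ^ (2 * k)

/-- The open positive orthant `ℝ₊ⁿ = (0,∞)ⁿ`. -/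
def Rplus (n : ℕ) : Set (Fin n → ℝ) := {x | ∀ i, 0 < x i}

/-- The constant `d_n(k) = ∏_{j=1}^n Γ(1+jk)/Γ(1+k)`. -/
noncomputable def dnk (n : ℕ) (k : ℝ) : ℝ :=
  ∏ j ∈ Finset.range n, Real.Gamma (1 + (j + 1) * k) / Real.Gamma (1 + k)

/-- The multivariable Gamma function `Γ_n(μ;k) = ∏_{j=1}^n Γ(μ - k(j-1))`. -/
noncomputable def Gammank (n : ℕ) (k : ℝ) (μ : ℂ) : ℂ :=
  ∏ j ∈ Finset.range n, Complex.Gamma (μ - ((k * (j : ℝ) : ℝ) : ℂ))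

/-- A family of type-A Riesz distributions for multiplicity `k > 0`: a map `R : ℂ → 𝓢'(ℝⁿ)`
such that `μ ↦ ⟨R_μ, φ⟩` is entire for every Schwartz `φ`, and for `Re μ > μ₀ = k(n-1)`,
`⟨R_μ, φ⟩ = (d_n(k)Γ_n(μ;k))⁻¹ ∫_{ℝ₊ⁿ} φ(x) D(x)^{μ-μ₀-1} ω_k(x) dx`. -/
def IsRieszFamily (n : ℕ) (k : ℝ)
    (R : ℂ → (SchwartzMap (Fin n → ℝ) ℂ →L[ℂ] ℂ)) : Prop :=
  (∀ φ : SchwartzMap (Fin n → ℝ) ℂ, Differentiable ℂ (fun μ => R μ φ)) ∧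
  ∀ μ : ℂ, k * ((n : ℝ) - 1) < μ.re → ∀ φ : SchwartzMap (Fin n → ℝ) ℂ,
    R μ φ = ((dnk n k : ℂ) * Gammank n k μ)⁻¹ *
      ∫ x in Rplus n,
        φ x * (∏ i, (x i : ℂ) ^ (μ - ((k * ((n : ℝ) - 1) : ℝ) : ℂ) - 1)) * (wk n k x : ℂ)

open Filter Topology

/-! ### The regularised weight and integrability -/

/-- The regularised Dunkl weight `∏_{l≠j} ((x_l - x_j)² + ε)^{k/2}`. The product runs over ordered
pairs, so each unordered pair contributes the exponent `k`; at `ε = 0` this is `wk`. -/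
noncomputable def weps (n : ℕ) (k ε : ℝ) (x : Fin n → ℝ) : ℝ :=
  ∏ l, ∏ j, if l = j then 1 else ((x l - x j) ^ 2 + ε) ^ (k / 2)

lemma weps_zero (n : ℕ) {k : ℝ} (hk : 0 < k) (x : Fin n → ℝ) : weps n k 0 x = wk n k x := by
  have h := Finset.prod_prod_Ioi_mul_eq_prod_prod_off_diag
    (fun i j : Fin n => |x i - x j| ^ k)
  have h1 : weps n k 0 x = ∏ i, ∏ j ∈ ({i} : Finset (Fin n))ᶜ, |x i - x j| ^ k := by
    unfold weps
    refine Finset.prod_congr rfl fun i _ => ?_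
    rw [← Finset.prod_subset (Finset.subset_univ ({i} : Finset (Fin n))ᶜ)]
    · refine Finset.prod_congr rfl fun j hj => ?_
      have : i ≠ j := by
        rintro rfl; simp at hj
      rw [if_neg this, add_zero, ← sq_abs, ← Real.rpow_natCast, ← Real.rpow_mul (abs_nonneg _)]
      congr 1; push_cast; ring
    · intro j _ hj
      have : i = j := by simpa [eq_comm] using hj
      rw [if_pos this]
  rw [h1, wk]
  have h2 : ∀ i j : Fin n, |x j - x i| ^ k = |x i - x j| ^ k := fun i j => by
    rw [abs_sub_comm]
  simp_rw [h2] at h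
  rw [← h]
  refine Finset.prod_congr rfl fun i _ => Finset.prod_congr rfl fun j hj => ?_
  rw [two_mul, Real.rpow_add_of_nonneg (abs_nonneg _) hk.le hk.le]

lemma weps_perm (n : ℕ) (k ε : ℝ) (x : Fin n → ℝ) (σ : Equiv.Perm (Fin n)) :
    weps n k ε (x ∘ σ) = weps n k ε x := by
  unfold weps
  rw [← Equiv.prod_comp σ (fun l => ∏ j, if l = j then 1 else ((x l - x j) ^ 2 + ε) ^ (k / 2))]
  refine Finset.prod_congr rfl fun l _ => ?_
  rw [← Equiv.prod_comp σ (fun j => if σ l = j then 1 else ((x (σ l) - x j) ^ 2 + ε) ^ (k / 2))]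
  simp

lemma weps_nonneg (n : ℕ) (k : ℝ) {ε : ℝ} (hε : 0 ≤ ε) (x : Fin n → ℝ) : 0 ≤ weps n k ε x := by
  refine Finset.prod_nonneg fun l _ => Finset.prod_nonneg fun j _ => ?_
  split_ifs
  · exact zero_le_one
  · positivity

lemma weps_cont (n : ℕ) {k : ℝ} (hk : 0 < k) (ε : ℝ) : Continuous (weps n k ε) := by
  refine continuous_finsetProd _ fun l _ => continuous_finsetProd _ fun j _ => ?_
  split_ifs
  · exact continuous_const
  · exact Continuous.rpow_const (by fun_prop) fun x => Or.inr (by positivity)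

lemma one_le_prod_one_add {n : ℕ} {x : Fin n → ℝ} (hx : ∀ i, 0 ≤ x i) :
    1 ≤ ∏ l, (1 + x l) := by
  refine Finset.one_le_prod fun i _ => by linarith [hx i]

lemma one_add_le_prod {n : ℕ} {x : Fin n → ℝ} (hx : ∀ i, 0 ≤ x i) (i : Fin n) :
    1 + x i ≤ ∏ l, (1 + x l) := by
  rw [← Finset.mul_prod_erase _ _ (Finset.mem_univ i)]
  refine le_mul_of_one_le_right (by linarith [hx i]) ?_
  exact Finset.one_le_prod fun j _ => by linarith [hx j]

lemma sub_sq_add_le {n : ℕ} {x : Fin n → ℝ} (hx : ∀ i, 0 ≤ x i) {ε : ℝ} (hε : ε ≤ 1)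
    (l j : Fin n) : (x l - x j) ^ 2 + ε ≤ (∏ l, (1 + x l)) ^ 4 := by
  have h1 := one_add_le_prod hx l
  have h2 := one_add_le_prod hx j
  have := hx l
  have := hx j
  have h3 : (x l - x j) ^ 2 + ε ≤ ((1 + x l) * (1 + x j)) ^ 2 := by nlinarith [mul_nonneg (hx l) (hx j)]
  calc _ ≤ _ := h3
    _ ≤ ((∏ l, (1 + x l)) * (∏ l, (1 + x l))) ^ 2 := by
        have := one_le_prod_one_add hx
        gcongr
    _ = _ := by ring

/-- A polynomial bound on the orthant, uniform in `ε ∈ [0, 1]`. -/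
lemma weps_le (n : ℕ) {k : ℝ} (hk : 0 < k) : ∃ N : ℕ, ∀ ε : ℝ, 0 ≤ ε → ε ≤ 1 →
    ∀ x : Fin n → ℝ, (∀ i, 0 ≤ x i) → weps n k ε x ≤ (∏ l, (1 + x l)) ^ N := by
  obtain ⟨M, hM⟩ := exists_nat_ge (4 * (k / 2))
  refine ⟨(M * n) * n, fun ε hε hε1 x hx => ?_⟩
  have h1 := one_le_prod_one_add hx
  have key : ∀ l j : Fin n, (if l = j then 1 else ((x l - x j) ^ 2 + ε) ^ (k / 2))
      ≤ (∏ l, (1 + x l)) ^ M := by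
    intro l j
    split_ifs
    · exact one_le_pow₀ h1
    · calc _ ≤ ((∏ l, (1 + x l)) ^ 4) ^ (k / 2) := by
            have := sub_sq_add_le hx hε1 l j
            gcongr
        _ = (∏ l, (1 + x l)) ^ (4 * (k / 2)) := by
            rw [← Real.rpow_natCast, ← Real.rpow_mul (by linarith)]; norm_num
        _ ≤ (∏ l, (1 + x l)) ^ (M : ℝ) := Real.rpow_le_rpow_of_exponent_le h1 hM
        _ = _ := Real.rpow_natCast _ _
  have hpos : ∀ l j : Fin n, 0 ≤ (if l = j then 1 else ((x l - x j) ^ 2 + ε) ^ (k / 2)) := by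
    intro l j; split_ifs
    · exact zero_le_one
    · positivity
  calc weps n k ε x ≤ ∏ l : Fin n, ∏ j : Fin n, (∏ l, (1 + x l)) ^ M :=
        Finset.prod_le_prod (fun l _ => Finset.prod_nonneg fun j _ => hpos l j)
          fun l _ => Finset.prod_le_prod (fun j _ => hpos l j) fun j _ => key l j
    _ = _ := by simp [pow_mul]

lemma weps_insertNth (n : ℕ) {k : ℝ} (hk : 0 < k) {ε : ℝ} (hε : 0 ≤ ε) (i : Fin (n + 1))
    (t : ℝ)
    (y : Fin n → ℝ) :
    weps (n + 1) k ε (i.insertNth t y) =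
      (∏ j, ((t - y j) ^ 2 + ε) ^ k) * weps n k ε y := by
  unfold weps
  rw [Fin.prod_univ_succAbove _ i]
  simp_rw [Fin.prod_univ_succAbove _ i]
  simp only [if_true, Fin.insertNth_apply_same, Fin.insertNth_apply_succAbove, one_mul,
    Fin.succAbove_ne, Fin.ne_succAbove, if_false, Fin.succAbove_right_inj, Finset.prod_mul_distrib]
  rw [← mul_assoc, ← Finset.prod_mul_distrib]
  congr 1
  refine Finset.prod_congr rfl fun j _ => ?_
  rw [← neg_sub (y j) t, neg_sq, ← Real.rpow_add_of_nonneg (by positivity) (by positivity) (by positivity),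
    add_halves]

/-- The derivative of a product in terms of logarithmic derivatives, in a form that allows
factors to vanish. -/
lemma hasDerivAt_prod_log {ι : Type*} (s : Finset ι) (f : ι → ℝ → ℝ) (c : ι → ℝ) (t : ℝ)
    (h : ∀ i ∈ s, HasDerivAt (f i) (f i t * c i) t) :
    HasDerivAt (fun u => ∏ i ∈ s, f i u) ((∏ i ∈ s, f i t) * ∑ i ∈ s, c i) t := by
  classical
  induction s using Finset.induction_on with
  | empty => simpa using hasDerivAt_const t (1 : ℝ)
  | insert a s ha ih =>
    simp only [Finset.prod_insert ha, Finset.sum_insert ha]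
    have := (h a (Finset.mem_insert_self a s)).fun_mul
      (ih fun i hi => h i (Finset.mem_insert_of_mem hi))
    exact this.congr_deriv (by ring)

lemma weps_hasDerivAt (n : ℕ) (k : ℝ) {ε : ℝ} (hε : 0 < ε) (x : Fin n → ℝ) (i : Fin n) :
    HasDerivAt (fun t => weps n k ε (Function.update x i t))
      (weps n k ε x * ∑ j, 2 * k * ((x i - x j) / ((x i - x j) ^ 2 + ε))) (x i) := by
  have hu : ∀ l : Fin n, HasDerivAt (fun t => Function.update x i t l)
      (if l = i then 1 else 0) (x i) := by
    intro l
    split_ifs with h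
    · subst h; simpa using hasDerivAt_id' (x l)
    · simpa [Function.update_of_ne h] using hasDerivAt_const (x i) (x l)
  have hxi : Function.update x i (x i) = x := Function.update_eq_self i x
  set c : Fin n → Fin n → ℝ := fun l j =>
    k * ((x l - x j) / ((x l - x j) ^ 2 + ε)) *
      ((if l = i then 1 else 0) - (if j = i then 1 else 0)) with hc
  have h1 : ∀ l j : Fin n, HasDerivAt (fun t => if l = j then (1 : ℝ) else
      ((Function.update x i t l - Function.update x i t j) ^ 2 + ε) ^ (k / 2))
      ((if l = j then (1 : ℝ) else ((Function.update x i (x i) l -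
        Function.update x i (x i) j) ^ 2 + ε) ^ (k / 2)) * c l j) (x i) := by
    intro l j
    split_ifs with h
    · subst h
      simpa [hc] using hasDerivAt_const (x i) (1 : ℝ)
    · have h2 := (((hu l).fun_sub (hu j)).fun_pow 2).add_const ε
      have hpos : 0 < (x l - x j) ^ 2 + ε := by positivity
      have h3 := h2.rpow_const (p := k / 2) (Or.inl (by rw [hxi]; positivity))
      convert h3 using 1
      simp only [hxi, hc]
      rw [Real.rpow_sub_one hpos.ne']
      field_simp
      norm_num
      ring
  have h4 := hasDerivAt_prod_log Finset.univ _ (fun l => ∑ j, c l j) (x i)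
    (fun l _ => hasDerivAt_prod_log Finset.univ _ (c l) (x i) (fun j _ => h1 l j))
  refine h4.congr_deriv ?_
  simp only [hxi]
  refine congrArg₂ (· * ·) rfl ?_
  simp only [hc, mul_sub, Finset.sum_sub_distrib, mul_ite, mul_one, mul_zero,
    Finset.sum_ite_eq', Finset.mem_univ, if_true]
  rw [Finset.sum_comm]
  simp only [Finset.sum_ite_eq', Finset.mem_univ, if_true]
  rw [← Finset.sum_sub_distrib]
  refine Finset.sum_congr rfl fun j _ => ?_
  rw [show (x j - x i) = -(x i - x j) by ring, neg_sq]
  ring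

/-- The regularised density `∏ x_i^{a-1} · w_ε(x)`. -/
noncomputable def Wt (n : ℕ) (k ε a : ℝ) (x : Fin n → ℝ) : ℝ :=
  (∏ i, x i ^ (a - 1)) * weps n k ε x

/-- The function `∏ x_i^{a-1} e^{-x_i/4}`, an integrable majorant on the orthant for all integrands
below. -/
noncomputable def dom (n : ℕ) (a : ℝ) (x : Fin n → ℝ) : ℝ :=
  ∏ i, (x i ^ (a - 1) * Real.exp (-(x i) / 4))

lemma Rplus_eq (n : ℕ) : Rplus n = Set.univ.pi fun _ => Set.Ioi 0 := by
  ext x; simp [Rplus]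

lemma measurableSet_Rplus (n : ℕ) : MeasurableSet (Rplus n) := by
  rw [Rplus_eq]; exact MeasurableSet.univ_pi fun _ => measurableSet_Ioi

lemma restrict_Rplus (n : ℕ) : (volume : Measure (Fin n → ℝ)).restrict (Rplus n) =
    Measure.pi fun _ => (volume : Measure ℝ).restrict (Set.Ioi 0) := by
  rw [Rplus_eq, volume_pi, Measure.restrict_pi_pi]

lemma dom_integrable (n : ℕ) {a : ℝ} (ha : 0 < a) : IntegrableOn (dom n a) (Rplus n) := by
  rw [IntegrableOn, restrict_Rplus]
  unfold dom
  refine Integrable.fintype_prod (f := fun _ : Fin n => fun t : ℝ => t ^ (a - 1) * Real.exp (-t / 4))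
    fun _ => ?_
  have := integrableOn_rpow_mul_exp_neg_mul_rpow (s := a - 1) (p := 1) (b := 1/4) (by linarith) one_pos
    (by norm_num)
  refine this.congr (ae_of_all _ fun t => ?_)
  simp only [Real.rpow_one]
  congr 2; ring

lemma one_add_pow_le (K : ℕ) : ∃ C : ℝ, 0 < C ∧ ∀ t : ℝ, 0 ≤ t → (1 + t) ^ K ≤ C * Real.exp (t / 4) := by
  refine ⟨4 ^ K * K.factorial * Real.exp (1 / 4), by positivity, fun t ht => ?_⟩
  have := Real.pow_div_factorial_le_exp ((1 + t) / 4) (by positivity) K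
  rw [div_le_iff₀ (by positivity), div_pow, div_le_iff₀ (by positivity)] at this
  calc _ ≤ _ := this
    _ = _ := by rw [add_div, Real.exp_add]; ring

lemma prod_pow_le (n K : ℕ) : ∃ C : ℝ, 0 < C ∧ ∀ x : Fin n → ℝ, (∀ i, 0 ≤ x i) →
    (∏ l, (1 + x l)) ^ K * Real.exp (-(∑ i, x i) / 2) ≤ C * Real.exp (-(∑ i, x i) / 4) := by
  obtain ⟨C, hC, h⟩ := one_add_pow_le K
  refine ⟨C ^ n, by positivity, fun x hx => ?_⟩
  have h1 : (∏ l, (1 + x l)) ^ K ≤ C ^ n * Real.exp ((∑ i, x i) / 4) := by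
    rw [← Finset.prod_pow]
    calc _ ≤ ∏ l, (C * Real.exp (x l / 4)) :=
          Finset.prod_le_prod (fun i _ => by have := hx i; positivity) fun i _ => h _ (hx i)
      _ = _ := by
        rw [Finset.prod_mul_distrib, ← Real.exp_sum, Finset.sum_div]; simp
  calc _ ≤ C ^ n * Real.exp ((∑ i, x i) / 4) * Real.exp (-(∑ i, x i) / 2) := by gcongr
    _ = _ := by rw [mul_assoc, ← Real.exp_add]; congr 2; ring

lemma Wt_nonneg (n : ℕ) (k : ℝ) {ε : ℝ} (hε : 0 ≤ ε) (a : ℝ) {x : Fin n → ℝ} (hx : ∀ i, 0 < x i) :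
    0 ≤ Wt n k ε a x :=
  mul_nonneg (Finset.prod_nonneg fun i _ => Real.rpow_nonneg (hx i).le _) (weps_nonneg n k hε x)

lemma dom_eq (n : ℕ) (a : ℝ) (x : Fin n → ℝ) :
    dom n a x = (∏ i, x i ^ (a - 1)) * Real.exp (-(∑ i, x i) / 4) := by
  rw [dom, Finset.prod_mul_distrib, ← Real.exp_sum]
  simp only [neg_div, Finset.sum_neg_distrib, Finset.sum_div]

lemma Wt_dom (n : ℕ) {k : ℝ} (hk : 0 < k) (a : ℝ) (M : ℕ) : ∃ D : ℝ, 0 < D ∧ ∀ ε : ℝ, 0 ≤ ε → ε ≤ 1 →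
    ∀ x : Fin n → ℝ, (∀ i, 0 < x i) →
    (∏ l, (1 + x l)) ^ M * Real.exp (-(∑ i, x i) / 2) * Wt n k ε a x ≤ D * dom n a x := by
  obtain ⟨N, hN⟩ := weps_le n hk
  obtain ⟨C, hC, h⟩ := prod_pow_le n (M + N)
  refine ⟨C, hC, fun ε h0 h1 x hx => ?_⟩
  have hx' := fun i => (hx i).le
  have hP := one_le_prod_one_add hx'
  have hA : 0 ≤ ∏ i, x i ^ (a - 1) := Finset.prod_nonneg fun i _ => Real.rpow_nonneg (hx' i) _
  rw [dom_eq, Wt]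
  calc _ = (∏ i, x i ^ (a - 1)) * (((∏ l, (1 + x l)) ^ M * weps n k ε x) * Real.exp (-(∑ i, x i) / 2)) := by ring
    _ ≤ (∏ i, x i ^ (a - 1)) * (((∏ l, (1 + x l)) ^ M * (∏ l, (1 + x l)) ^ N) * Real.exp (-(∑ i, x i) / 2)) := by
        gcongr; exact hN ε h0 h1 x hx'
    _ ≤ (∏ i, x i ^ (a - 1)) * (C * Real.exp (-(∑ i, x i) / 4)) := by
        rw [← pow_add]; exact mul_le_mul_of_nonneg_left (h x hx') hA
    _ = _ := by ring

lemma Wt_measurable (n : ℕ) {k : ℝ} (hk : 0 < k) (ε a : ℝ) : Measurable (Wt n k ε a) := by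
  unfold Wt
  refine Measurable.mul (Finset.measurable_prod _ fun i _ => ?_) (weps_cont n hk ε).measurable
  exact (measurable_pi_apply i).pow_const _

/-- Functions of size `e^{-∑x_i/2}` up to polynomial factors are dominated by `dom` after
multiplication by the density, uniformly in `ε ∈ [0, 1]`. -/
lemma norm_mul_Wt_le {n : ℕ} {k : ℝ} (hk : 0 < k) (a : ℝ) (C : ℝ) (M : ℕ) :
    ∃ D : ℝ, 0 < D ∧ ∀ ε : ℝ, 0 ≤ ε → ε ≤ 1 → ∀ (x : Fin n → ℝ) (z : ℂ), (∀ i, 0 < x i) →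
      ‖z‖ ≤ C * (∏ l, (1 + x l)) ^ M * Real.exp (-(∑ i, x i) / 2) →
      ‖z * (Wt n k ε a x : ℂ)‖ ≤ D * dom n a x := by
  obtain ⟨D, hD, h⟩ := Wt_dom n hk a M
  refine ⟨(|C| + 1) * D, by positivity, fun ε h0 h1 x z hx hz => ?_⟩
  have hW := Wt_nonneg n k h0 a hx
  have hP := one_le_prod_one_add fun i => (hx i).le
  rw [norm_mul, Complex.norm_real, Real.norm_of_nonneg hW]
  calc _ ≤ C * (∏ l, (1 + x l)) ^ M * Real.exp (-(∑ i, x i) / 2) * Wt n k ε a x := by gcongr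
    _ ≤ (|C| + 1) * (∏ l, (1 + x l)) ^ M * Real.exp (-(∑ i, x i) / 2) * Wt n k ε a x := by
        gcongr; linarith [le_abs_self C]
    _ = (|C| + 1) * ((∏ l, (1 + x l)) ^ M * Real.exp (-(∑ i, x i) / 2) * Wt n k ε a x) := by ring
    _ ≤ (|C| + 1) * (D * dom n a x) := by
        have := h ε h0 h1 x hx
        gcongr
    _ = _ := by ring

lemma integrable_mul_Wt {n : ℕ} {k : ℝ} (hk : 0 < k) {a : ℝ} (ha : 0 < a) {ε : ℝ} (h0 : 0 ≤ ε)
    (h1 : ε ≤ 1) {f : (Fin n → ℝ) → ℂ} (hf : Measurable f) {C : ℝ} {M : ℕ}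
    (hb : ∀ x, (∀ i, 0 < x i) → ‖f x‖ ≤ C * (∏ l, (1 + x l)) ^ M * Real.exp (-(∑ i, x i) / 2)) :
    IntegrableOn (fun x => f x * (Wt n k ε a x : ℂ)) (Rplus n) := by
  obtain ⟨D, hD, h⟩ := norm_mul_Wt_le (n := n) hk a C M
  refine Integrable.mono' ((dom_integrable n ha).const_mul D) ?_ ?_
  · exact (hf.mul (Complex.measurable_ofReal.comp (Wt_measurable n hk ε a))).aestronglyMeasurable
  · refine (ae_restrict_iff' (measurableSet_Rplus n)).2 (ae_of_all _ fun x hx => ?_)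
    exact h ε h0 h1 x (f x) hx (hb x hx)

/-! ### Integration over the orthant -/

lemma mem_Rplus_insertNth {m : ℕ} (i : Fin (m + 1)) (t : ℝ) (y : Fin m → ℝ) :
    i.insertNth (α := fun _ => ℝ) t y ∈ Rplus (m + 1) ↔ 0 < t ∧ y ∈ Rplus m := by
  simp only [Rplus, Set.mem_ofPred_eq]
  rw [Fin.forall_iff_succAbove i]
  simp

lemma mp_insertNth {m : ℕ} (i : Fin (m + 1)) :
    MeasurePreserving (MeasurableEquiv.piFinSuccAbove (fun _ : Fin (m + 1) => ℝ) i).symm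
      ((volume.restrict (Set.Ioi 0)).prod (volume.restrict (Rplus m)))
      (volume.restrict (Rplus (m + 1))) := by
  have h := (volume_preserving_piFinSuccAbove (fun _ : Fin (m + 1) => ℝ) i).symm
  have h2 := h.restrict_preimage_emb (MeasurableEquiv.measurableEmbedding _) (Rplus (m + 1))
  rw [Measure.volume_eq_prod] at h2
  rw [Measure.prod_restrict]
  have h3 : (Set.Ioi (0 : ℝ)) ×ˢ Rplus m =
      (MeasurableEquiv.piFinSuccAbove (fun _ : Fin (m + 1) => ℝ) i).symm ⁻¹' Rplus (m + 1) := by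
    ext ⟨t, y⟩
    exact (mem_Rplus_insertNth i t y).symm
  rw [h3]
  exact h2

lemma integrable_slice {E : Type*} [NormedAddCommGroup E] {m : ℕ} (i : Fin (m + 1)) {F : (Fin (m + 1) → ℝ) → E}
    (hF : IntegrableOn F (Rplus (m + 1))) :
    Integrable (fun p : ℝ × (Fin m → ℝ) => F (i.insertNth p.1 p.2))
      ((volume.restrict (Set.Ioi 0)).prod (volume.restrict (Rplus m))) :=
  ((mp_insertNth i).integrable_comp_emb (MeasurableEquiv.measurableEmbedding _)).2 hF

lemma integral_slice {E : Type*} [NormedAddCommGroup E] [NormedSpace ℝ E] {m : ℕ} (i : Fin (m + 1)) (F : (Fin (m + 1) → ℝ) → E) :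
    ∫ x in Rplus (m + 1), F x = ∫ p, F (i.insertNth p.1 p.2)
      ∂((volume.restrict (Set.Ioi 0)).prod (volume.restrict (Rplus m))) :=
  ((mp_insertNth i).integral_comp (MeasurableEquiv.measurableEmbedding _) F).symm


/-- The fundamental theorem of calculus on `(0, ∞)` for a primitive `g` tending to `0` at both ends.
Nothing is assumed about `g` at `0` itself. -/
lemma integral_Ioi_eq_zero {g g' : ℝ → ℂ} (hd : ∀ t, 0 < t → HasDerivAt g (g' t) t)
    (hi : IntegrableOn g' (Set.Ioi 0)) (h0 : Tendsto g (𝓝[>] 0) (𝓝 0))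
    (hinf : Tendsto g atTop (𝓝 0)) : ∫ t in Set.Ioi 0, g' t = 0 := by
  set G : ℝ → ℂ := fun t => if 0 < t then g t else 0 with hG
  have hev : ∀ t, 0 < t → G =ᶠ[𝓝 t] g := fun t ht => by
    filter_upwards [lt_mem_nhds ht] with s hs
    simp [hG, hs]
  have h := integral_Ioi_of_hasDerivAt_of_tendsto (f := G) (f' := g') (a := 0) (m := 0) ?_
    (fun t ht => (hd t ht).congr_of_eventuallyEq (hev t ht)) hi ?_
  · rw [h]; simp [hG]
  · refine continuousWithinAt_Ioi_iff_Ici.1 ?_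
    have : G 0 = 0 := by simp [hG]
    rw [ContinuousWithinAt, this]
    refine h0.congr' ?_
    filter_upwards [self_mem_nhdsWithin] with s hs
    simp [hG, Set.mem_Ioi.1 hs]
  · refine hinf.congr' ?_
    filter_upwards [eventually_gt_atTop 0] with s hs
    simp [hG, hs]

/-- If `F = ∂_i H` on the orthant and `H` tends to `0` at both ends of every ray in direction `i`, then
`∫ F = 0`, by Fubini. -/
lemma integral_Rplus_deriv_eq_zero {n : ℕ} (i : Fin n) {F H : (Fin n → ℝ) → ℂ}
    (hF : IntegrableOn F (Rplus n))
    (hd : ∀ x ∈ Rplus n, HasDerivAt (fun t => H (Function.update x i t)) (F x) (x i))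
    (h0 : ∀ x ∈ Rplus n, Tendsto (fun t => H (Function.update x i t)) (𝓝[>] 0) (𝓝 0))
    (hinf : ∀ x ∈ Rplus n, Tendsto (fun t => H (Function.update x i t)) atTop (𝓝 0)) :
    ∫ x in Rplus n, F x = 0 := by
  obtain _ | m := n
  · exact i.elim0
  have hint := integrable_slice i hF
  rw [integral_slice i, integral_prod_symm _ hint]
  have hae := hint.prod_left_ae
  have hmem : ∀ᵐ y ∂(volume.restrict (Rplus m)), y ∈ Rplus m :=
    ae_restrict_mem (measurableSet_Rplus m)
  have hupd : ∀ (y : Fin m → ℝ) (s t : ℝ), Function.update (i.insertNth (α := fun _ => ℝ) s y) i t =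
      i.insertNth t y := fun y s t => by simp
  rw [integral_eq_zero_of_ae]
  filter_upwards [hae, hmem] with y hy hyR
  have h1 : (i.insertNth (α := fun _ => ℝ) 1 y) ∈ Rplus (m + 1) :=
    (mem_Rplus_insertNth i 1 y).2 ⟨one_pos, hyR⟩
  refine integral_Ioi_eq_zero (g := fun t => H (i.insertNth t y)) ?_ hy ?_ ?_
  · intro t ht
    have := hd _ ((mem_Rplus_insertNth i t y).2 ⟨ht, hyR⟩)
    simpa [hupd] using this
  · simpa [hupd] using h0 _ h1
  · simpa [hupd] using hinf _ h1

lemma integral_Rplus_perm {n : ℕ} (σ : Equiv.Perm (Fin n)) (F : (Fin n → ℝ) → ℂ) :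
    ∫ x in Rplus n, F (x ∘ σ) = ∫ x in Rplus n, F x := by
  have h := volume_measurePreserving_piCongrLeft (fun _ : Fin n => ℝ) σ.symm
  have h2 := h.restrict_preimage_emb (MeasurableEquiv.measurableEmbedding _) (Rplus n)
  have h3 := h2.integral_comp (MeasurableEquiv.measurableEmbedding _) F
  have h4 : ∀ x : Fin n → ℝ, MeasurableEquiv.piCongrLeft (fun _ : Fin n => ℝ) σ.symm x = x ∘ σ := by
    intro x; ext j
    have := Equiv.piCongrLeft_apply_apply (P := fun _ : Fin n => ℝ) (e := σ.symm) x (σ j)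
    simp only [Equiv.symm_apply_apply] at this
    exact this
  simp_rw [h4] at h3
  have h5 : (MeasurableEquiv.piCongrLeft (fun _ : Fin n => ℝ) σ.symm) ⁻¹' (Rplus n) = Rplus n := by
    ext x
    simp only [Set.mem_preimage, h4, Rplus, Set.mem_ofPred_eq, Function.comp]
    exact ⟨fun h i => by simpa using h (σ.symm i), fun h i => h _⟩
  rwa [h5] at h3

/-! ### Integration by parts -/

/-- On the open orthant `|f(x)| ≤ C e^{-∑x_i/2}`. -/
def ExpBd (n : ℕ) (C : ℝ) (f : (Fin n → ℝ) → ℂ) : Prop :=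
  ∀ x, (∀ i, 0 < x i) → ‖f x‖ ≤ C * Real.exp (-(∑ i, x i) / 2)

lemma prod_rpow_update {n : ℕ} (i : Fin n) (a : ℝ) (x : Fin n → ℝ) (t : ℝ) :
    ∏ l, Function.update x i t l ^ (a - 1) =
      t ^ (a - 1) * ∏ l ∈ univ.erase i, x l ^ (a - 1) := by
  rw [← Finset.mul_prod_erase _ _ (Finset.mem_univ i)]
  simp only [Function.update_self]
  congr 1
  refine Finset.prod_congr rfl fun l hl => ?_
  rw [Function.update_of_ne (Finset.ne_of_mem_erase hl)]

lemma prod_rpow_split {n : ℕ} (i : Fin n) (a : ℝ) (x : Fin n → ℝ) :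
    ∏ l, x l ^ (a - 1) = x i ^ (a - 1) * ∏ l ∈ univ.erase i, x l ^ (a - 1) :=
  (Finset.mul_prod_erase _ _ (Finset.mem_univ i)).symm

lemma Wt_hasDerivAt (n : ℕ) (k : ℝ) {ε : ℝ} (hε : 0 < ε) (a : ℝ) {x : Fin n → ℝ} (hx : x ∈ Rplus n)
    (i : Fin n) :
    HasDerivAt (fun t => t * Wt n k ε a (Function.update x i t))
      (Wt n k ε a x * (a + x i * ∑ j, 2 * k * ((x i - x j) / ((x i - x j) ^ 2 + ε)))) (x i) := by
  have h1 := weps_hasDerivAt n k hε x i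
  have h2 := ((Real.hasDerivAt_rpow_const (p := a - 1) (Or.inl (hx i).ne')).mul_const
    (∏ l ∈ univ.erase i, x l ^ (a - 1))).fun_mul h1
  have h3 := (hasDerivAt_id' (x i)).fun_mul h2
  simp only [Wt, prod_rpow_update]
  refine h3.congr_deriv ?_
  rw [prod_rpow_split i a x, Real.rpow_sub_one (hx i).ne' (a - 1)]
  have := (hx i).ne'
  simp only [Function.update_eq_self]
  field_simp
  ring

lemma update_mem_Rplus {n : ℕ} {x : Fin n → ℝ} (hx : x ∈ Rplus n) (i : Fin n) {t : ℝ} (ht : 0 < t) :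
    Function.update x i t ∈ Rplus n := by
  intro l
  by_cases h : l = i
  · subst h; simpa using ht
  · simpa [Function.update_of_ne h] using hx l

lemma dom_update {n : ℕ} (i : Fin n) (a : ℝ) (x : Fin n → ℝ) {t : ℝ} (ht : 0 < t) :
    t * dom n a (Function.update x i t) = (t ^ a * Real.exp (-(1 / 4) * t)) *
      ∏ l ∈ univ.erase i, (x l ^ (a - 1) * Real.exp (-(x l) / 4)) := by
  rw [dom, ← Finset.mul_prod_erase _ _ (Finset.mem_univ i)]
  simp only [Function.update_self]
  rw [Real.rpow_sub_one ht.ne', show -t / 4 = -(1/4) * t by ring, ← mul_assoc, ← mul_assoc,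
    mul_div_cancel₀ _ ht.ne']
  congr 1
  refine Finset.prod_congr rfl fun l hl => ?_
  rw [Function.update_of_ne (Finset.ne_of_mem_erase hl)]

lemma abs_div_sq_add_le {ε : ℝ} (h0 : 0 < ε) (h1 : ε ≤ 1) (d : ℝ) : |d / (d ^ 2 + ε)| ≤ 1 / ε := by
  have h : 0 < d ^ 2 + ε := by positivity
  rw [abs_div, abs_of_pos h, div_le_div_iff₀ h h0]
  rcases le_total |d| 1 with h2 | h2
  · nlinarith [sq_nonneg d]
  · nlinarith [sq_abs d]

lemma le_prod_one_add {n : ℕ} {x : Fin n → ℝ} (hx : x ∈ Rplus n) (i : Fin n) :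
    x i ≤ ∏ l, (1 + x l) := by
  have := one_add_le_prod (fun i => (hx i).le) i
  linarith

lemma expBd_pow {n : ℕ} {C : ℝ} {f : (Fin n → ℝ) → ℂ} (hf : ExpBd n C f) :
    ∀ x, (∀ i, 0 < x i) → ‖f x‖ ≤ C * (∏ l, (1 + x l)) ^ 0 * Real.exp (-(∑ i, x i) / 2) := by
  intro x hx
  simpa using hf x hx

section ibp
variable {n : ℕ} {k : ℝ} (hk : 0 < k) {a : ℝ} (ha : 0 < a) (i : Fin n)
  {f f' : (Fin n → ℝ) → ℂ} {q : Fin n → (Fin n → ℝ) → ℂ}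
  (hfm : Measurable f) (hfm' : Measurable f') (hqm : ∀ j, Measurable (q j)) {C : ℝ}
  (hfb : ExpBd n C f) (hfb' : ExpBd n C f') (hqb : ∀ j, ExpBd n C (q j))
  (hd : ∀ x ∈ Rplus n, HasDerivAt (fun t => f (Function.update x i t)) (f' x) (x i))
  (hq : ∀ j, ∀ x ∈ Rplus n, (x i : ℂ) * f x - (x j : ℂ) * f (x ∘ Equiv.swap i j) =
    ((x i - x j : ℝ) : ℂ) * q j x)

/-- The term `x_i f (x_i - x_j)/((x_i - x_j)² + ε)` times the density. It arises, with the factor `2k`,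
when the factors of the regularised weight containing `x_j` are differentiated in `x_i`. For `j = i`
it is zero. -/
noncomputable def Gterm (n : ℕ) (k a : ℝ) (i : Fin n) (f : (Fin n → ℝ) → ℂ) (ε : ℝ) (j : Fin n)
    (x : Fin n → ℝ) : ℂ :=
  (x i : ℂ) * f x * (((x i - x j) / ((x i - x j) ^ 2 + ε) : ℝ) : ℂ) * (Wt n k ε a x : ℂ)

include hk ha hfm hfb in
lemma Gterm_int {ε : ℝ} (h0 : 0 < ε) (h1 : ε ≤ 1) (j : Fin n) :
    IntegrableOn (Gterm n k a i f ε j) (Rplus n) := by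
  refine integrable_mul_Wt hk ha h0.le h1 (M := 1) (C := |C| * (1 / ε)) ?_ fun x hx => ?_
  · fun_prop
  · rw [norm_mul, norm_mul, Complex.norm_real, Complex.norm_real, Real.norm_of_nonneg (hx i).le,
      Real.norm_eq_abs]
    have hA := abs_div_sq_add_le h0 h1 (x i - x j)
    have hB := hfb x hx
    have hC := le_prod_one_add hx i
    have := (hx i).le
    have h0P := this.trans hC
    calc _ ≤ (∏ l, (1 + x l)) * (|C| * Real.exp (-(∑ i, x i) / 2)) * (1 / ε) := by
          gcongr
          exact hB.trans (mul_le_mul_of_nonneg_right (le_abs_self C) (by positivity))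
      _ = _ := by ring

include hk ha hfm hfm' hfb hfb' in
lemma main_int {ε : ℝ} (h0 : 0 ≤ ε) (h1 : ε ≤ 1) :
    IntegrableOn (fun x => ((a : ℂ) * f x + (x i : ℂ) * f' x) * (Wt n k ε a x : ℂ)) (Rplus n) := by
  refine integrable_mul_Wt hk ha h0 h1 (M := 1) (C := a * |C| + |C|) ?_ fun x hx => ?_
  · fun_prop
  · have hB := (hfb x hx).trans (mul_le_mul_of_nonneg_right (le_abs_self C) (by positivity))
    have hB' := (hfb' x hx).trans (mul_le_mul_of_nonneg_right (le_abs_self C) (by positivity))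
    have hC := le_prod_one_add hx i
    have h1P := one_le_prod_one_add fun i => (hx i).le
    have := (hx i).le
    calc _ ≤ ‖(a : ℂ) * f x‖ + ‖(x i : ℂ) * f' x‖ := norm_add_le _ _
      _ = a * ‖f x‖ + x i * ‖f' x‖ := by
          rw [norm_mul, norm_mul, Complex.norm_real, Complex.norm_real,
            Real.norm_of_nonneg (hx i).le, Real.norm_of_nonneg ha.le]
      _ ≤ a * ((∏ l, (1 + x l)) * (|C| * Real.exp (-(∑ i, x i) / 2))) +
          (∏ l, (1 + x l)) * (|C| * Real.exp (-(∑ i, x i) / 2)) := by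
          gcongr
          · exact hB.trans (le_mul_of_one_le_left (by positivity) h1P)
      _ = _ := by ring

include hk ha hfm hfm' hfb hfb' hd in
/-- The integral of the `x_i`-derivative of `x_i f` times the regularised density vanishes. -/
lemma ibp_eps {ε : ℝ} (h0 : 0 < ε) (h1 : ε ≤ 1) :
    ∫ x in Rplus n, (((a : ℂ) * f x + (x i : ℂ) * f' x) * (Wt n k ε a x : ℂ) +
      ∑ j, 2 * (k : ℂ) * Gterm n k a i f ε j x) = 0 := by
  have hFi : IntegrableOn (fun x => ((a : ℂ) * f x + (x i : ℂ) * f' x) * (Wt n k ε a x : ℂ) +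
      ∑ j, 2 * (k : ℂ) * Gterm n k a i f ε j x) (Rplus n) :=
    (main_int hk ha i hfm hfm' hfb hfb' h0.le h1).add
      (integrable_finsetSum _ fun j _ => (Gterm_int hk ha i hfm hfb h0 h1 j).const_mul _)
  obtain ⟨D, hD, hDb⟩ := norm_mul_Wt_le (n := n) hk a C 0
  have hbd : ∀ x ∈ Rplus n, ∀ t, 0 < t → ‖f (Function.update x i t) *
      ((t * Wt n k ε a (Function.update x i t) : ℝ) : ℂ)‖ ≤
      D * ((t ^ a * Real.exp (-(1 / 4) * t)) *
      ∏ l ∈ univ.erase i, (x l ^ (a - 1) * Real.exp (-(x l) / 4))) := by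
    intro x hx t ht
    have hu := update_mem_Rplus hx i ht
    have := hDb ε h0.le h1 _ (f (Function.update x i t)) hu (expBd_pow hfb _ hu)
    rw [← dom_update i a x ht]
    calc _ = t * ‖f (Function.update x i t) * (Wt n k ε a (Function.update x i t) : ℂ)‖ := by
          push_cast
          simp only [norm_mul, Complex.norm_real, Real.norm_of_nonneg ht.le]; ring
      _ ≤ t * (D * dom n a (Function.update x i t)) := by gcongr
      _ = _ := by ring
  refine integral_Rplus_deriv_eq_zero i (H := fun x => f x * ((x i * Wt n k ε a x : ℝ) : ℂ)) hFi ?_ ?_ ?_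
  · intro x hx
    have hw := (Wt_hasDerivAt n k h0 a hx i).ofReal_comp
    have := (hd x hx).fun_mul hw
    simp only [Function.update_self]
    refine this.congr_deriv ?_
    simp only [Function.update_eq_self, Gterm]
    push_cast
    simp only [Finset.mul_sum, mul_add]
    rw [add_mul]
    have : ∀ A B E F : ℂ, A = E → B = F → A + B = E + F := by rintro A B _ _ rfl rfl; rfl
    rw [← add_assoc]
    refine this _ _ _ _ (by ring) ?_
    refine Finset.sum_congr rfl fun j _ => ?_
    ring
  · intro x hx
    simp only [Function.update_self]
    have hlim : Tendsto (fun t : ℝ => D * ((t ^ a * Real.exp (-(1 / 4) * t)) *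
      ∏ l ∈ univ.erase i, (x l ^ (a - 1) * Real.exp (-(x l) / 4)))) (𝓝[>] 0) (𝓝 0) := by
      have hc : ContinuousAt (fun t : ℝ => D * ((t ^ a * Real.exp (-(1 / 4) * t)) *
        ∏ l ∈ univ.erase i, (x l ^ (a - 1) * Real.exp (-(x l) / 4)))) 0 := by
        have := Real.continuousAt_rpow_const 0 a (Or.inr ha.le)
        fun_prop
      have := hc.tendsto
      simp only [Real.zero_rpow ha.ne', zero_mul, mul_zero] at this
      exact this.mono_left nhdsWithin_le_nhds
    refine squeeze_zero_norm' ?_ hlim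
    filter_upwards [self_mem_nhdsWithin] with t ht using hbd x hx t ht
  · intro x hx
    simp only [Function.update_self]
    have hlim : Tendsto (fun t : ℝ => D * ((t ^ a * Real.exp (-(1 / 4) * t)) *
      ∏ l ∈ univ.erase i, (x l ^ (a - 1) * Real.exp (-(x l) / 4)))) atTop (𝓝 0) := by
      have := ((tendsto_rpow_mul_exp_neg_mul_atTop_nhds_zero a (1 / 4) (by norm_num)).mul_const
        (∏ l ∈ univ.erase i, (x l ^ (a - 1) * Real.exp (-(x l) / 4)))).const_mul D
      simpa using this
    refine squeeze_zero_norm' ?_ hlim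
    filter_upwards [eventually_gt_atTop 0] with t ht using hbd x hx t ht

include hk ha hqm hqb in
lemma q_int {ε : ℝ} (h0 : 0 ≤ ε) (h1 : ε ≤ 1) (j : Fin n) :
    IntegrableOn (fun x => q j x * (((x i - x j) ^ 2 / ((x i - x j) ^ 2 + ε) : ℝ) : ℂ) *
      (Wt n k ε a x : ℂ)) (Rplus n) := by
  have := hqm j
  refine integrable_mul_Wt hk ha h0 h1 (M := 0) (C := C) (by fun_prop) fun x hx => ?_
  refine le_trans ?_ (expBd_pow (hqb j) x hx)
  rw [norm_mul, Complex.norm_real, Real.norm_of_nonneg (by positivity)]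
  exact mul_le_of_le_one_right (norm_nonneg _) (div_le_one_of_le₀ (by linarith) (by positivity))

lemma Wt_perm (n : ℕ) (k ε a : ℝ) (x : Fin n → ℝ) (σ : Equiv.Perm (Fin n)) :
    Wt n k ε a (x ∘ σ) = Wt n k ε a x := by
  unfold Wt
  rw [weps_perm]
  congr 1
  exact Equiv.prod_comp σ (fun l => x l ^ (a - 1))

include hk ha hfm hfb hq in
/-- Averaging `Gterm` over the transposition `σ_ij` replaces the singular quotient `1/(x_i - x_j)` by
the divided difference `q_j`. -/
lemma symm_eps {ε : ℝ} (h0 : 0 < ε) (h1 : ε ≤ 1) (j : Fin n) :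
    ∫ x in Rplus n, q j x * (((x i - x j) ^ 2 / ((x i - x j) ^ 2 + ε) : ℝ) : ℂ) *
      (Wt n k ε a x : ℂ) = 2 * ∫ x in Rplus n, Gterm n k a i f ε j x := by
  have hG := Gterm_int hk ha i hfm hfb h0 h1 j
  have hG2 : ∫ x in Rplus n, Gterm n k a i f ε j (x ∘ Equiv.swap i j) =
      ∫ x in Rplus n, Gterm n k a i f ε j x := integral_Rplus_perm _ _
  have hform : ∀ x : Fin n → ℝ, Gterm n k a i f ε j (x ∘ Equiv.swap i j) =
      (x j : ℂ) * f (x ∘ Equiv.swap i j) * (((x j - x i) / ((x i - x j) ^ 2 + ε) : ℝ) : ℂ) *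
        (Wt n k ε a x : ℂ) := by
    intro x
    simp only [Gterm, Wt_perm, Function.comp, Equiv.swap_apply_left, Equiv.swap_apply_right]
    rw [show (x j - x i) ^ 2 = (x i - x j) ^ 2 by ring]
  have hG2i : IntegrableOn (fun x => Gterm n k a i f ε j (x ∘ Equiv.swap i j)) (Rplus n) := by
    have hfm2 : Measurable fun x : Fin n → ℝ => f (x ∘ Equiv.swap i j) :=
      hfm.comp (measurable_pi_iff.2 fun l => measurable_pi_apply _)
    simp_rw [hform]
    refine integrable_mul_Wt hk ha h0.le h1 (M := 1) (C := |C| * (1 / ε)) (by fun_prop) fun x hx => ?_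
    rw [norm_mul, norm_mul, Complex.norm_real, Complex.norm_real, Real.norm_of_nonneg (hx j).le,
      Real.norm_eq_abs]
    have hA := abs_div_sq_add_le h0 h1 (x j - x i)
    rw [show (x j - x i) ^ 2 = (x i - x j) ^ 2 by ring] at hA
    have hB := hfb (x ∘ Equiv.swap i j) (fun l => hx _)
    have hs : ∑ l, (x ∘ Equiv.swap i j) l = ∑ l, x l := Equiv.sum_comp (Equiv.swap i j) x
    rw [hs] at hB
    have hC := le_prod_one_add hx j
    have := (hx j).le
    have h0P := this.trans hC
    calc _ ≤ (∏ l, (1 + x l)) * (|C| * Real.exp (-(∑ i, x i) / 2)) * (1 / ε) := by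
          gcongr
          exact hB.trans (mul_le_mul_of_nonneg_right (le_abs_self C) (by positivity))
      _ = _ := by ring
  rw [two_mul]
  nth_rewrite 2 [← hG2]
  rw [← integral_add hG hG2i]
  refine setIntegral_congr_fun (measurableSet_Rplus n) fun x hx => ?_
  have := hq j x hx
  simp only [hform]
  rw [Gterm]
  rw [show (((x i - x j) ^ 2 / ((x i - x j) ^ 2 + ε) : ℝ) : ℂ) = ((x i - x j : ℝ) : ℂ) *
    (((x i - x j) / ((x i - x j) ^ 2 + ε) : ℝ) : ℂ) by push_cast; ring, ← mul_assoc (q j x),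
    mul_comm (q j x), ← this]
  push_cast
  ring

include hk ha hfm hfm' hqm hfb hfb' hqb hd hq in
/-- Integration by parts in `x_i` against `∏ x_l^{a-1} ω_k`. Here `f' = ∂_i f`, and `q j` is the
divided difference `(x_i f - x_j f∘σ_ij)/(x_i - x_j)` for `j ≠ i`, while `q i = 0`. -/
lemma ibp (hqi : q i = 0) :
    ∫ x in Rplus n, ((a : ℂ) * f x + (x i : ℂ) * f' x + (k : ℂ) * ∑ j, q j x) *
      (Wt n k 0 a x : ℂ) = 0 := by
  set ε : ℕ → ℝ := fun m => 1 / ((m : ℝ) + 1) with hεdef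
  have hε0 : ∀ m, 0 < ε m := fun m => by positivity
  have hε1 : ∀ m, ε m ≤ 1 := fun m => by
    rw [hεdef]; simp only; rw [div_le_one (by positivity)]; linarith [(Nat.cast_nonneg m : (0:ℝ) ≤ m)]
  have hεt : Tendsto ε atTop (𝓝 0) := tendsto_one_div_add_atTop_nhds_zero_nat
  set Φ : ℝ → (Fin n → ℝ) → ℂ := fun e x => ((a : ℂ) * f x + (x i : ℂ) * f' x + (k : ℂ) *
    ∑ j, q j x * (((x i - x j) ^ 2 / ((x i - x j) ^ 2 + e) : ℝ) : ℂ)) * (Wt n k e a x : ℂ) with hΦ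
  have hzero : ∀ m, ∫ x in Rplus n, Φ (ε m) x = 0 := by
    intro m
    rw [← ibp_eps hk ha i hfm hfm' hfb hfb' hd (hε0 m) (hε1 m)]
    have e1 : ∀ x, Φ (ε m) x = ((a : ℂ) * f x + (x i : ℂ) * f' x) * (Wt n k (ε m) a x : ℂ) +
        ∑ j, (k : ℂ) * (q j x * (((x i - x j) ^ 2 / ((x i - x j) ^ 2 + ε m) : ℝ) : ℂ) *
          (Wt n k (ε m) a x : ℂ)) := by
      intro x
      simp only [hΦ, add_mul, Finset.mul_sum, Finset.sum_mul, mul_assoc]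
    have hm := main_int hk ha i hfm hfm' hfb hfb' (hε0 m).le (hε1 m)
    have hqi := fun j => (q_int hk ha i hqm hqb (hε0 m).le (hε1 m) j).const_mul (k : ℂ)
    have hgi := fun j => (Gterm_int hk ha i hfm hfb (hε0 m) (hε1 m) j).const_mul (2 * (k : ℂ))
    simp_rw [e1]
    rw [integral_add hm (integrable_finsetSum _ fun j _ => hqi j),
      integral_add hm (integrable_finsetSum _ fun j _ => hgi j),
      integral_finsetSum _ (fun j _ => hqi j), integral_finsetSum _ (fun j _ => hgi j)]
    congr 1
    refine Finset.sum_congr rfl fun j _ => ?_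
    rw [integral_const_mul, integral_const_mul, symm_eps hk ha i hfm hfb hq (hε0 m) (hε1 m) j]
    ring
  -- dominated convergence as `ε → 0`
  obtain ⟨D, hD, hDb⟩ := norm_mul_Wt_le (n := n) hk a (a * |C| + |C| + k * (n * |C|)) 1
  have hlim : Tendsto (fun m => ∫ x in Rplus n, Φ (ε m) x) atTop (𝓝 (∫ x in Rplus n,
      ((a : ℂ) * f x + (x i : ℂ) * f' x + (k : ℂ) * ∑ j, q j x) * (Wt n k 0 a x : ℂ))) := by
    refine tendsto_integral_of_dominated_convergence (fun x => D * dom n a x) ?_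
      ((dom_integrable n ha).const_mul D) ?_ ?_
    · intro m
      have := Wt_measurable n hk (ε m) a
      refine Measurable.aestronglyMeasurable ?_
      simp only [hΦ]
      fun_prop
    · intro m
      refine (ae_restrict_iff' (measurableSet_Rplus n)).2 (ae_of_all _ fun x hx => ?_)
      refine hDb (ε m) (hε0 m).le (hε1 m) x _ hx ?_
      have hB := (hfb x hx).trans (mul_le_mul_of_nonneg_right (le_abs_self C) (by positivity))
      have hB' := (hfb' x hx).trans (mul_le_mul_of_nonneg_right (le_abs_self C) (by positivity))
      have hQ := fun j => (hqb j x hx).trans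
        (mul_le_mul_of_nonneg_right (le_abs_self C) (by positivity))
      have hC := le_prod_one_add hx i
      have h1P := one_le_prod_one_add fun i => (hx i).le
      have := (hx i).le
      have hQ' : ‖∑ j, q j x * (((x i - x j) ^ 2 / ((x i - x j) ^ 2 + ε m) : ℝ) : ℂ)‖ ≤
          n * (|C| * Real.exp (-(∑ i, x i) / 2)) := by
        refine (norm_sum_le _ _).trans ?_
        calc _ ≤ ∑ j : Fin n, |C| * Real.exp (-(∑ i, x i) / 2) := by
              refine Finset.sum_le_sum fun j _ => le_trans ?_ (hQ j)
              have := hε0 m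
              rw [norm_mul, Complex.norm_real, Real.norm_of_nonneg (by positivity)]
              exact mul_le_of_le_one_right (norm_nonneg _)
                (div_le_one_of_le₀ (by linarith) (by positivity))
          _ = _ := by simp
      calc _ ≤ ‖(a : ℂ) * f x‖ + ‖(x i : ℂ) * f' x‖ + ‖(k : ℂ) *
            ∑ j, q j x * (((x i - x j) ^ 2 / ((x i - x j) ^ 2 + ε m) : ℝ) : ℂ)‖ := norm_add₃_le
        _ = a * ‖f x‖ + x i * ‖f' x‖ + k *
            ‖∑ j, q j x * (((x i - x j) ^ 2 / ((x i - x j) ^ 2 + ε m) : ℝ) : ℂ)‖ := by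
            rw [norm_mul, norm_mul, norm_mul, Complex.norm_real, Complex.norm_real,
              Complex.norm_real, Real.norm_of_nonneg (hx i).le, Real.norm_of_nonneg ha.le,
              Real.norm_of_nonneg hk.le]
        _ ≤ a * ((∏ l, (1 + x l)) * (|C| * Real.exp (-(∑ i, x i) / 2))) +
            (∏ l, (1 + x l)) * (|C| * Real.exp (-(∑ i, x i) / 2)) +
            k * ((∏ l, (1 + x l)) * (n * (|C| * Real.exp (-(∑ i, x i) / 2)))) := by
            gcongr
            · exact hB.trans (le_mul_of_one_le_left (by positivity) h1P)
            · exact hQ'.trans (le_mul_of_one_le_left (by positivity) h1P)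
        _ = _ := by ring
    · refine (ae_restrict_iff' (measurableSet_Rplus n)).2 (ae_of_all _ fun x hx => ?_)
      have hWt : Tendsto (fun m => (Wt n k (ε m) a x : ℂ)) atTop (𝓝 (Wt n k 0 a x : ℂ)) := by
        have hc : Continuous fun e : ℝ => (Wt n k e a x : ℂ) := by
          refine Complex.continuous_ofReal.comp (continuous_const.mul ?_)
          refine continuous_finsetProd _ fun l _ => continuous_finsetProd _ fun j _ => ?_
          split_ifs
          · exact continuous_const
          · exact Continuous.rpow_const (by fun_prop) fun x => Or.inr (by positivity)
        exact (hc.tendsto 0).comp hεt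
      have hterm : ∀ j, Tendsto (fun m => q j x *
          (((x i - x j) ^ 2 / ((x i - x j) ^ 2 + ε m) : ℝ) : ℂ) * (Wt n k (ε m) a x : ℂ)) atTop
          (𝓝 (q j x * (Wt n k 0 a x : ℂ))) := by
        intro j
        by_cases hij : i = j
        · subst hij
          simp [hqi]
        by_cases hx0 : x i - x j = 0
          -- on the wall `x_i = x_j` the quotient does not tend to `1`, but the limiting weight vanishes
        · have hw0 : Wt n k 0 a x = 0 := by
            rw [Wt, weps]
            refine mul_eq_zero_of_right _ (Finset.prod_eq_zero (Finset.mem_univ i)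
              (Finset.prod_eq_zero (Finset.mem_univ j) ?_))
            rw [if_neg hij, hx0]
            simp [Real.zero_rpow (by positivity : k / 2 ≠ 0)]
          simp [hx0, hw0]
        · have hr : Tendsto (fun m => (((x i - x j) ^ 2 / ((x i - x j) ^ 2 + ε m) : ℝ) : ℂ)) atTop
              (𝓝 ((1 : ℝ) : ℂ)) := by
            refine (Complex.continuous_ofReal.tendsto _).comp ?_
            have h2 : (x i - x j) ^ 2 ≠ 0 := pow_ne_zero _ hx0
            have := (tendsto_const_nhds (x := (x i - x j) ^ 2)).div
              ((tendsto_const_nhds (x := (x i - x j) ^ 2)).add hεt) (by simpa using hx0)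
            rw [add_zero, div_self h2] at this
            exact this
          have := ((tendsto_const_nhds (x := q j x)).mul hr).mul hWt
          simpa using this
      have hsum := (tendsto_finsetSum univ fun j _ => hterm j).const_mul (k : ℂ)
      have hmain := (tendsto_const_nhds (x := (a : ℂ) * f x + (x i : ℂ) * f' x)).mul hWt
      have := hmain.add hsum
      simp only [hΦ, add_mul, Finset.mul_sum, Finset.sum_mul, mul_assoc] at this ⊢
      exact this
  simp_rw [hzero] at hlim
  exact tendsto_nhds_unique hlim tendsto_const_nhds

end ibp

/-! ### The Selberg–Laguerre integral -/

/-- The Selberg–Laguerre integral `∫ e^{-∑x_i} ∏ x_i^{a-1} ω_k(x) dx` over the orthant. -/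
noncomputable def SL (n : ℕ) (k a : ℝ) : ℝ :=
  ∫ x in Rplus n, Real.exp (-∑ i, x i) * Wt n k 0 a x

lemma prod_le_prod_one_add {n : ℕ} {x : Fin n → ℝ} (hx : ∀ i, 0 < x i) (T : Finset (Fin n)) :
    ∏ l ∈ T, x l ≤ ∏ l, (1 + x l) := by
  calc ∏ l ∈ T, x l ≤ ∏ l ∈ T, (1 + x l) :=
        Finset.prod_le_prod (fun l _ => (hx l).le) fun l _ => by linarith
    _ ≤ _ := by
        refine Finset.prod_le_prod_of_subset_of_one_le (Finset.subset_univ T) ?_ ?_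
        · intro l _; have := hx l; positivity
        · intro l _ _; have := hx l; linarith

/-- The function `∏_{l∈T} x_l · e^{-∑x_i}`. -/
noncomputable def mono (n : ℕ) (T : Finset (Fin n)) (x : Fin n → ℝ) : ℂ :=
  (((∏ l ∈ T, x l) * Real.exp (-∑ i, x i) : ℝ) : ℂ)

lemma mono_expBd (n : ℕ) : ∃ C : ℝ, 0 < C ∧ ∀ T : Finset (Fin n), ExpBd n C (mono n T) := by
  obtain ⟨C, hC, h⟩ := prod_pow_le n 1
  refine ⟨C, hC, fun T x hx => ?_⟩
  have h0 : 0 ≤ ∏ l ∈ T, x l := Finset.prod_nonneg fun l _ => (hx l).le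
  have hs : 0 ≤ ∑ i, x i := Finset.sum_nonneg fun l _ => (hx l).le
  rw [mono, Complex.norm_real, Real.norm_of_nonneg (by positivity)]
  have h1 := h x fun i => (hx i).le
  calc _ ≤ (∏ l, (1 + x l)) * Real.exp (-∑ i, x i) := by
        gcongr; exact prod_le_prod_one_add hx T
    _ = ((∏ l, (1 + x l)) ^ 1 * Real.exp (-(∑ i, x i) / 2)) * Real.exp (-(∑ i, x i) / 2) := by
        rw [pow_one, mul_assoc, ← Real.exp_add]; congr 2; ring
    _ ≤ (C * Real.exp (-(∑ i, x i) / 4)) * Real.exp (-(∑ i, x i) / 2) := by gcongr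
    _ ≤ (C * 1) * Real.exp (-(∑ i, x i) / 2) := by
        gcongr; exact Real.exp_le_one_iff.2 (by linarith)
    _ = _ := by ring

lemma mono_measurable (n : ℕ) (T : Finset (Fin n)) : Measurable (mono n T) := by
  have : Continuous (mono n T) := by unfold mono; fun_prop
  exact this.measurable

lemma mono_int {n : ℕ} {k : ℝ} (hk : 0 < k) {a : ℝ} (ha : 0 < a) (T : Finset (Fin n)) :
    IntegrableOn (fun x => mono n T x * (Wt n k 0 a x : ℂ)) (Rplus n) := by
  obtain ⟨C, hC, h⟩ := mono_expBd n
  exact integrable_mul_Wt hk ha le_rfl zero_le_one (mono_measurable n T) (expBd_pow (h T))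

lemma SL_integrable {n : ℕ} {k : ℝ} (hk : 0 < k) {a : ℝ} (ha : 0 < a) :
    IntegrableOn (fun x => Real.exp (-∑ i, x i) * Wt n k 0 a x) (Rplus n) := by
  have h : IntegrableOn (fun x => ((Real.exp (-∑ i, x i) * Wt n k 0 a x : ℝ) : ℂ)) (Rplus n) := by
    refine (mono_int (n := n) hk ha ∅).congr (ae_of_all _ fun x => ?_)
    simp [mono]
  exact h.re

lemma SL_ofReal (n : ℕ) (k a : ℝ) :
    (SL n k a : ℂ) = ∫ x in Rplus n, mono n ∅ x * (Wt n k 0 a x : ℂ) := by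
  rw [SL, ← integral_complex_ofReal]
  simp [mono]

/-- Aomoto's recursion. For `f = mono n T` and `i ∉ T` the divided difference in `(i, j)` is `0` if
`j ∈ T` and `f` otherwise, so `ibp` relates `T ∪ {i}` to `T`. -/
lemma mono_step {n : ℕ} {k : ℝ} (hk : 0 < k) {a : ℝ} (ha : 0 < a) (T : Finset (Fin n)) (i : Fin n)
    (hi : i ∉ T) :
    ∫ x in Rplus n, mono n (insert i T) x * (Wt n k 0 a x : ℂ) =
      ((a + k * (n - 1 - T.card) : ℝ) : ℂ) * ∫ x in Rplus n, mono n T x * (Wt n k 0 a x : ℂ) := by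
  obtain ⟨C, hC, hb⟩ := mono_expBd n
  set q : Fin n → (Fin n → ℝ) → ℂ := fun j => if j = i ∨ j ∈ T then 0 else mono n T with hqdef
  have hsumx : ∀ (x : Fin n → ℝ) (σ : Equiv.Perm (Fin n)), ∑ l, (x ∘ σ) l = ∑ l, x l :=
    fun x σ => Equiv.sum_comp σ x
  have h := ibp hk ha i (f := mono n T) (f' := fun x => - mono n T x) (q := q) (C := C)
    (mono_measurable n T) (mono_measurable n T).neg ?_ (hb T) ?_ ?_ ?_ ?_ ?_
  -- the `n - 1 - |T|` indices `j ∉ T ∪ {i}` each contribute `mono n T`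
  · have hsum : ∀ x, ∑ j, q j x = ((n - 1 - T.card : ℝ) : ℂ) * mono n T x := by
      intro x
      have : ∀ j, q j x = if j ∈ insert i T then 0 else mono n T x := by
        intro j
        simp only [hqdef, Finset.mem_insert]
        split_ifs <;> rfl
      simp_rw [this]
      rw [Finset.sum_ite, Finset.sum_const_zero, zero_add, Finset.sum_const, nsmul_eq_mul]
      congr 1
      have hc : (univ.filter fun j => j ∉ insert i T) = (insert i T)ᶜ := by ext; simp
      rw [hc, Finset.card_compl, Finset.card_insert_of_notMem hi, Fintype.card_fin,
        Nat.cast_sub]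
      · push_cast; ring
      · rw [← Finset.card_insert_of_notMem hi]
        simpa using Finset.card_le_univ (insert i T)
    have hx : ∀ x, ((a : ℂ) * mono n T x + (x i : ℂ) * (- mono n T x) + (k : ℂ) * ∑ j, q j x) *
        (Wt n k 0 a x : ℂ) = ((a + k * (n - 1 - T.card) : ℝ) : ℂ) * (mono n T x * (Wt n k 0 a x : ℂ))
        - mono n (insert i T) x * (Wt n k 0 a x : ℂ) := by
      intro x
      rw [hsum]
      simp only [mono, Finset.prod_insert hi]
      push_cast
      ring
    simp_rw [hx] at h
    rw [integral_sub ((mono_int hk ha T).const_mul _) (mono_int hk ha _), integral_const_mul] at h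
    exact (sub_eq_zero.1 h).symm
  · intro j
    simp only [hqdef]; split_ifs
    · exact measurable_const
    · exact mono_measurable n T
  · intro x hx
    simpa using hb T x hx
  · intro j x hx
    simp only [hqdef]; split_ifs
    · simp only [Pi.zero_apply, norm_zero]; positivity
    · exact hb T x hx
  · intro x hx
    have h1 : ∀ t, mono n T (Function.update x i t) =
        (((∏ l ∈ T, x l) * Real.exp (-(t + ∑ l ∈ univ.erase i, x l)) : ℝ) : ℂ) := by
      intro t
      rw [mono, Finset.prod_update_of_notMem hi, ← Finset.add_sum_erase _ _ (Finset.mem_univ i)]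
      simp only [Function.update_self]
      have : ∑ l ∈ univ.erase i, Function.update x i t l = ∑ l ∈ univ.erase i, x l := by
        refine Finset.sum_congr rfl fun l hl => ?_
        rw [Function.update_of_ne (Finset.ne_of_mem_erase hl)]
      rw [this]
    simp_rw [h1]
    have h2 : HasDerivAt (fun t : ℝ => (∏ l ∈ T, x l) * Real.exp (-(t + ∑ l ∈ univ.erase i, x l)))
        ((∏ l ∈ T, x l) * (Real.exp (-(x i + ∑ l ∈ univ.erase i, x l)) * (-1))) (x i) := by
      have := ((hasDerivAt_id' (x i)).add_const (∑ l ∈ univ.erase i, x l)).fun_neg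
      exact (this.exp).const_mul _
    refine h2.ofReal_comp.congr_deriv ?_
    rw [mono, Finset.add_sum_erase _ _ (Finset.mem_univ i)]
    push_cast; ring
  · intro j x hx
    simp only [mono, hsumx]
    have hprod : ∏ l ∈ T, (x ∘ Equiv.swap i j) l = ∏ l ∈ T.map (Equiv.swap i j).toEmbedding, x l := by
      simp
    by_cases hji : j = i
    · subst hji; simp
    by_cases hjT : j ∈ T
    · simp only [hqdef, hjT, or_true, if_true, Pi.zero_apply, mul_zero]
      have : x j * ∏ l ∈ T, (x ∘ Equiv.swap i j) l = x i * ∏ l ∈ T, x l := by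
        rw [← Finset.mul_prod_erase T _ hjT, ← Finset.mul_prod_erase T (fun l => x l) hjT]
        have h3 : ∏ l ∈ T.erase j, (x ∘ Equiv.swap i j) l = ∏ l ∈ T.erase j, x l := by
          refine Finset.prod_congr rfl fun l hl => ?_
          have hlj := Finset.ne_of_mem_erase hl
          have hli : l ≠ i := fun h => hi (h ▸ Finset.mem_of_mem_erase hl)
          simp [Equiv.swap_apply_of_ne_of_ne hli hlj]
        rw [h3]; simp; ring
      push_cast at this ⊢
      have h' := congrArg (fun r : ℝ => (r : ℂ)) this
      push_cast at h'
      linear_combination (-Complex.exp (-∑ i, (x i : ℂ))) * h'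
    · have h3 : ∏ l ∈ T, (x ∘ Equiv.swap i j) l = ∏ l ∈ T, x l := by
        refine Finset.prod_congr rfl fun l hl => ?_
        have hlj : l ≠ j := fun h => hjT (h ▸ hl)
        have hli : l ≠ i := fun h => hi (h ▸ hl)
        simp [Equiv.swap_apply_of_ne_of_ne hli hlj]
      simp only [hqdef, hjT, hji, or_false, if_false, mono, h3]
      push_cast; ring
  · simp [hqdef]

lemma mono_formula {n : ℕ} {k : ℝ} (hk : 0 < k) {a : ℝ} (ha : 0 < a) (T : Finset (Fin n)) :
    ∫ x in Rplus n, mono n T x * (Wt n k 0 a x : ℂ) =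
      ((∏ j ∈ range T.card, (a + k * (n - 1 - j)) : ℝ) : ℂ) * SL n k a := by
  induction T using Finset.induction_on with
  | empty => simp [SL_ofReal]
  | insert i T hi ih =>
    rw [mono_step hk ha T i hi, ih, Finset.card_insert_of_notMem hi, Finset.prod_range_succ]
    push_cast; ring

/-- The functional equation of the Selberg–Laguerre integral: the recursion `mono_step` carried from
`T = ∅` to the full index set. -/
lemma SL_succ {n : ℕ} {k : ℝ} (hk : 0 < k) {a : ℝ} (ha : 0 < a) :
    SL n k (a + 1) = (∏ j ∈ range n, (a + j * k)) * SL n k a := by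
  have h := mono_formula (n := n) hk ha univ
  have h1 : ∫ x in Rplus n, mono n univ x * (Wt n k 0 a x : ℂ) = (SL n k (a + 1) : ℂ) := by
    rw [SL_ofReal]
    refine setIntegral_congr_fun (measurableSet_Rplus n) fun x hx => ?_
    simp only [mono, Wt, Finset.prod_empty, one_mul]
    have : ∏ i, x i ^ (a + 1 - 1) = (∏ i, x i) * ∏ i, x i ^ (a - 1) := by
      rw [← Finset.prod_mul_distrib]
      refine Finset.prod_congr rfl fun l _ => ?_
      rw [add_sub_cancel_right, Real.rpow_sub_one (hx l).ne', mul_div_cancel₀ _ (hx l).ne']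
    rw [this]; push_cast; ring
  rw [h1, ← Finset.prod_range_reflect] at h
  have h2 : (∏ j ∈ range (univ : Finset (Fin n)).card,
      (a + k * ((n : ℝ) - 1 - ((univ : Finset (Fin n)).card - 1 - j : ℕ)))) = ∏ j ∈ range n, (a + j * k) := by
    simp only [Finset.card_univ, Fintype.card_fin]
    refine Finset.prod_congr rfl fun j hj => ?_
    have := Finset.mem_range.1 hj
    rw [Nat.sub_sub, Nat.cast_sub (by omega)]
    push_cast; ring
  rw [h2] at h
  exact_mod_cast h

/-- The integrand of the Selberg–Laguerre integral `SL`. -/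
noncomputable def SLi (n : ℕ) (k a : ℝ) (x : Fin n → ℝ) : ℝ :=
  Real.exp (-∑ i, x i) * Wt n k 0 a x

lemma SLi_nonneg (n : ℕ) (k a : ℝ) {x : Fin n → ℝ} (hx : x ∈ Rplus n) : 0 ≤ SLi n k a x :=
  mul_nonneg (Real.exp_pos _).le (Wt_nonneg n k le_rfl a hx)

lemma SLi_rpow (n : ℕ) (k : ℝ) (a b r s : ℝ) (hr : 0 < r) (hs : 0 < s) (hrs : r + s = 1)
    {x : Fin n → ℝ} (hx : x ∈ Rplus n) :
    SLi n k (r * a + s * b) x = SLi n k a x ^ r * SLi n k b x ^ s := by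
  have hw := weps_nonneg n k le_rfl x
  have hp : ∀ u : ℝ, 0 ≤ ∏ i, x i ^ u := fun u =>
    Finset.prod_nonneg fun i _ => Real.rpow_nonneg (hx i).le _
  unfold SLi Wt
  rw [Real.mul_rpow (Real.exp_pos _).le (mul_nonneg (hp _) hw), Real.mul_rpow (hp _) hw,
    Real.mul_rpow (Real.exp_pos _).le (mul_nonneg (hp _) hw), Real.mul_rpow (hp _) hw,
    ← Real.finsetProd_rpow _ _ (fun i _ => Real.rpow_nonneg (hx i).le _),
    ← Real.finsetProd_rpow _ _ (fun i _ => Real.rpow_nonneg (hx i).le _)]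
  have h1 : weps n k 0 x = weps n k 0 x ^ r * weps n k 0 x ^ s := by
    rw [← Real.rpow_add_of_nonneg hw hr.le hs.le, hrs, Real.rpow_one]
  have h2 : Real.exp (-∑ i, x i) = Real.exp (-∑ i, x i) ^ r * Real.exp (-∑ i, x i) ^ s := by
    rw [← Real.rpow_add (Real.exp_pos _), hrs, Real.rpow_one]
  have h3 : ∏ i, x i ^ (r * a + s * b - 1) = (∏ i, (x i ^ (a - 1)) ^ r) * ∏ i, (x i ^ (b - 1)) ^ s := by
    rw [← Finset.prod_mul_distrib]
    refine Finset.prod_congr rfl fun i _ => ?_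
    rw [← Real.rpow_mul (hx i).le, ← Real.rpow_mul (hx i).le, ← Real.rpow_add (hx i)]
    congr 1
    linear_combination hrs
  rw [h3]
  nth_rewrite 1 [h1, h2]
  ring

/-- Log-convexity of `SL` in `a`, from Hölder's inequality. -/
lemma SL_log_convex {n : ℕ} {k : ℝ} (hk : 0 < k) {a b r s : ℝ} (ha : 0 < a) (hb : 0 < b)
    (hr : 0 < r) (hs : 0 < s) (hrs : r + s = 1) :
    SL n k (r * a + s * b) ≤ SL n k a ^ r * SL n k b ^ s := by
  have e : Real.HolderConjugate (1 / r) (1 / s) := Real.holderConjugate_one_div hr hs hrs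
  have hae : ∀ {P : (Fin n → ℝ) → Prop}, (∀ x ∈ Rplus n, P x) →
      ∀ᵐ x ∂(volume.restrict (Rplus n)), P x := fun h =>
    (ae_restrict_iff' (measurableSet_Rplus n)).2 (ae_of_all _ h)
  have hpow : ∀ {c u : ℝ}, 0 < c → ∀ x ∈ Rplus n, (SLi n k u x ^ c) ^ (1 / c) = SLi n k u x := by
    intro c u hc x hx
    rw [← Real.rpow_mul (SLi_nonneg n k u hx), mul_one_div_cancel hc.ne', Real.rpow_one]
  have hmem : ∀ {c u : ℝ}, 0 < c → 0 < u →
      MemLp (fun x => SLi n k u x ^ c) (ENNReal.ofReal (1 / c)) (volume.restrict (Rplus n)) := by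
    intro c u hc hu
    have A : ENNReal.ofReal (1 / c) ≠ 0 := by
      rwa [Ne, ENNReal.ofReal_eq_zero, not_le, one_div_pos]
    have B : ENNReal.ofReal (1 / c) ≠ ⊤ := ENNReal.ofReal_ne_top
    have hm : Measurable (SLi n k u) := by
      have := Wt_measurable n hk 0 u
      unfold SLi; fun_prop
    rw [← memLp_norm_rpow_iff (hm.pow_const c).aestronglyMeasurable A B,
      ENNReal.toReal_ofReal (one_div_nonneg.mpr hc.le),
      ENNReal.div_self A B, memLp_one_iff_integrable]
    refine (SL_integrable (n := n) hk hu).congr (hae fun x hx => ?_)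
    simp only
    rw [Real.norm_of_nonneg (Real.rpow_nonneg (SLi_nonneg n k u hx) _), hpow hc x hx, SLi]
  have H := MeasureTheory.integral_mul_le_Lp_mul_Lq_of_nonneg e
    (hae fun x hx => Real.rpow_nonneg (SLi_nonneg n k a hx) r)
    (hae fun x hx => Real.rpow_nonneg (SLi_nonneg n k b hx) s) (hmem hr ha) (hmem hs hb)
  rw [one_div_one_div, one_div_one_div] at H
  rw [setIntegral_congr_fun (measurableSet_Rplus n) (fun x hx => hpow (u := a) hr x hx),
    setIntegral_congr_fun (measurableSet_Rplus n) (fun x hx => hpow (u := b) hs x hx)] at H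
  refine le_trans (le_of_eq ?_) H
  exact setIntegral_congr_fun (measurableSet_Rplus n) fun x hx => SLi_rpow n k a b r s hr hs hrs hx

lemma periodic_nat {g : ℝ → ℝ} (hg : ∀ y, 0 < y → g (y + 1) = g y) (y : ℝ) (hy : 0 < y) (m : ℕ) :
    g (y + m) = g y := by
  induction m with
  | zero => simp
  | succ m ih =>
    rw [Nat.cast_succ, ← add_assoc, hg _ (by positivity), ih]

/-- Two convex functions with the same first difference, whose second difference tends to zero,
differ by a constant. -/
lemma convex_unique {f h : ℝ → ℝ} (hf : ConvexOn ℝ (Set.Ioi 0) f) (hh : ConvexOn ℝ (Set.Ioi 0) h)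
    (hfh : ∀ y, 0 < y → f (y + 1) - f y = h (y + 1) - h y) {δ : ℝ → ℝ}
    (hδ : ∀ y, 0 < y → h (y + 1) - h y = δ y)
    (hδt : Tendsto (fun m : ℕ => δ (m + 2) - δ (m + 1)) atTop (𝓝 0)) {x : ℝ} (hx : 0 < x) :
    f x - h x = f 1 - h 1 := by
  have hper : ∀ y, 0 < y → (fun y => f y - h y) (y + 1) = (fun y => f y - h y) y := by
    intro y hy; have := hfh y hy; simp only; linarith
  -- convexity squeezes each increment between the slopes of the adjacent unit intervals
  have key : ∀ {φ : ℝ → ℝ}, ConvexOn ℝ (Set.Ioi 0) φ → ∀ (N : ℝ), 0 < N → ∀ y, 0 < y → y < 1 →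
      (φ (N + 1) - φ N) * y ≤ φ (N + 1 + y) - φ (N + 1) ∧
      φ (N + 1 + y) - φ (N + 1) ≤ (φ (N + 1 + 1) - φ (N + 1)) * y := by
    intro φ hφ N hN y hy hy1
    have h1 := hφ.slope_mono_adjacent (x := N) (y := N + 1) (z := N + 1 + y) (by simpa)
      (by simp only [Set.mem_Ioi]; linarith) (by linarith) (by linarith)
    have h2 := hφ.secant_mono_aux1 (x := N + 1) (y := N + 1 + y) (z := N + 1 + 1)
      (by simp only [Set.mem_Ioi]; linarith)
      (by simp only [Set.mem_Ioi]; linarith) (by linarith) (by linarith)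
    refine ⟨?_, by linarith⟩
    rw [show N + 1 - N = 1 by ring, show N + 1 + y - (N + 1) = y by ring, div_one,
      le_div_iff₀ hy] at h1
    exact h1
  have hunit : ∀ y, 0 < y → y < 1 → f y - h y = f 1 - h 1 := by
    intro y hy hy1
    have hb : ∀ m : ℕ, |(f y - h y) - (f 1 - h 1)| ≤ (δ (m + 2) - δ (m + 1)) * y := by
      intro m
      have hN : (0 : ℝ) < m + 1 := by positivity
      obtain ⟨a1, a2⟩ := key hf (m + 1) hN y hy hy1
      obtain ⟨b1, b2⟩ := key hh (m + 1) hN y hy hy1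
      have p1 := periodic_nat (g := fun y => f y - h y) hper y hy (m + 2)
      have p2 := periodic_nat (g := fun y => f y - h y) hper 1 one_pos (m + 1)
      push_cast at p1 p2
      rw [show y + ((m : ℝ) + 2) = m + 1 + 1 + y by ring] at p1
      rw [show 1 + ((m : ℝ) + 1) = m + 1 + 1 by ring] at p2
      have e1 := hfh (m + 1) hN
      have e2 := hfh (m + 1 + 1) (by linarith)
      have d1 := hδ (m + 1) hN
      have d2 := hδ (m + 1 + 1) (by linarith)
      rw [show (m : ℝ) + 2 = m + 1 + 1 by ring, ← d1, ← d2]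
      rw [e1] at a1; rw [e2] at a2
      rw [abs_le]; constructor <;> nlinarith
    have hlim : Tendsto (fun m : ℕ => (δ (m + 2) - δ (m + 1)) * y) atTop (𝓝 0) := by
      simpa using hδt.mul_const y
    have := ge_of_tendsto' hlim hb
    have := abs_nonpos_iff.1 this
    linarith
  set z := Int.fract x with hz
  have hxz : x = z + (⌊x⌋₊ : ℝ) := by
    rw [hz, natCast_floor_eq_intCast_floor hx.le]; exact (Int.fract_add_floor x).symm
  rcases (Int.fract_nonneg x).eq_or_lt with h0 | h0
  · have hz0 : z = 0 := h0.symm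
    rw [hz0, zero_add] at hxz
    have hfl : 1 ≤ ⌊x⌋₊ := by
      rcases Nat.eq_zero_or_pos ⌊x⌋₊ with h | h
      · rw [h] at hxz; simp at hxz; linarith
      · exact h
    obtain ⟨m, hm⟩ := Nat.exists_eq_add_of_le hfl
    have := periodic_nat (g := fun y => f y - h y) hper 1 one_pos m
    rw [hxz, hm]
    push_cast
    exact this
  · have := periodic_nat (g := fun y => f y - h y) hper z h0 ⌊x⌋₊
    rw [hxz]
    rw [← hunit z h0 (Int.fract_lt_one x)]
    exact this

lemma isOpen_Rplus (n : ℕ) : IsOpen (Rplus n) := by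
  rw [Rplus_eq]; exact isOpen_set_pi Set.finite_univ fun _ _ => isOpen_Ioi

lemma SL_pos {n : ℕ} {k : ℝ} (hk : 0 < k) {a : ℝ} (ha : 0 < a) : 0 < SL n k a := by
  have h := (setIntegral_pos_iff_support_of_nonneg_ae (μ := volume) (s := Rplus n) (f := SLi n k a)
    ((ae_restrict_iff' (measurableSet_Rplus n)).2 (ae_of_all _ fun x hx => SLi_nonneg n k a hx))
    (SL_integrable hk ha)).2 ?_
  · exact h
  have hopen : IsOpen (Rplus n ∩ {x | weps n k 0 x ≠ 0}) :=
    (isOpen_Rplus n).inter (isOpen_ne_fun (weps_cont n hk 0) continuous_const)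
  have hne : (Rplus n ∩ {x | weps n k 0 x ≠ 0}).Nonempty := by
    refine ⟨fun i => (i : ℝ) + 1, fun i => by positivity, ?_⟩
    refine (Finset.prod_pos fun l _ => Finset.prod_pos fun j _ => ?_).ne'
    split_ifs with hlj
    · exact one_pos
    · have : ((l : ℝ) + 1) - (j + 1) ≠ 0 := by
        have : ((l : ℕ) : ℝ) ≠ (j : ℕ) := by
          exact_mod_cast fun h => hlj (Fin.ext h)
        intro h; apply this; linarith
      positivity
  refine lt_of_lt_of_le (hopen.measure_pos volume hne) (measure_mono fun x hx => ⟨?_, hx.1⟩)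
  refine (mul_pos (Real.exp_pos _) (mul_pos (Finset.prod_pos fun i _ => ?_) ?_)).ne'
  · exact Real.rpow_pos_of_pos (hx.1 i) _
  · exact lt_of_le_of_ne (weps_nonneg n k le_rfl x) (Ne.symm hx.2)

lemma weps_translate (n : ℕ) (k ε : ℝ) (x : Fin n → ℝ) (t : ℝ) :
    weps n k ε (fun i => x i + t) = weps n k ε x := by
  unfold weps; simp

/-- The integral over the region where `x_i = t` is the strict minimum: translating the other
coordinates by `t` turns `∏_j |x_j - t|^{2k}` into `∏_j z_j^{2k}`. -/
lemma SL_inner (n : ℕ) {k : ℝ} (hk : 0 < k) {t : ℝ} (ht : 0 < t) (i : Fin (n + 1)) :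
    ∫ y in Rplus n, Set.indicator {x : Fin (n + 1) → ℝ | ∀ j, j ≠ i → x i < x j}
      (SLi (n + 1) k 1) (i.insertNth t y) = Real.exp (-(n + 1) * t) * SL n k (2 * k + 1) := by
  rw [← integral_indicator (measurableSet_Rplus n), SL, ← integral_indicator (measurableSet_Rplus n),
    ← integral_const_mul]
  rw [← integral_add_right_eq_self _ (fun _ : Fin n => t)]
  refine integral_congr_ae (ae_of_all _ fun z => ?_)
  simp only
  by_cases hz : z ∈ Rplus n
  · have h1 : z + (fun _ => t) ∈ Rplus n := fun j => add_pos (hz j) ht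
    have h2 : i.insertNth (α := fun _ => ℝ) t (z + (fun _ => t)) ∈
        {x : Fin (n + 1) → ℝ | ∀ j, j ≠ i → x i < x j} := by
      intro j hj
      obtain ⟨l, rfl⟩ := Fin.exists_succAbove_eq hj
      simpa using hz l
    rw [Set.indicator_of_mem h1, Set.indicator_of_mem h2, Set.indicator_of_mem hz, SLi, Wt, Wt,
      weps_insertNth n hk le_rfl]
    have h3 : weps n k 0 (z + (fun _ => t)) = weps n k 0 z := weps_translate n k 0 z t
    have h4 : ∏ j : Fin n, ((t - (z + (fun _ => t) : Fin n → ℝ) j) ^ 2 + 0) ^ k = ∏ j, z j ^ (2 * k + 1 - 1) := by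
      refine Finset.prod_congr rfl fun j _ => ?_
      rw [show ((t - (z + (fun _ => t) : Fin n → ℝ) j) ^ 2 + 0) = (z j) ^ 2 by simp, ← Real.rpow_natCast,
        ← Real.rpow_mul (hz j).le]
      congr 1; push_cast; ring
    have h5 : ∑ j, i.insertNth (α := fun _ => ℝ) t (z + (fun _ => t)) j = (n + 1) * t + ∑ j, z j := by
      rw [Fin.sum_univ_succAbove _ i]
      simp [Finset.sum_add_distrib]; ring
    rw [h3, h4, h5, neg_add, Real.exp_add]
    simp; ring_nf
  · rw [Set.indicator_of_notMem hz, mul_zero]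
    by_cases h1 : z + (fun _ => t) ∈ Rplus n
    · rw [Set.indicator_of_mem h1]
      refine Set.indicator_of_notMem (fun h2 => hz fun l => ?_) _
      have := h2 (i.succAbove l) (Fin.succAbove_ne i l)
      simpa using this
    · rw [Set.indicator_of_notMem h1]

lemma measurableSet_strictMin {m : ℕ} (i : Fin m) :
    MeasurableSet {x : Fin m → ℝ | ∀ j, j ≠ i → x i < x j} := by
  simp only [Set.ofPred_forall]
  refine MeasurableSet.iInter fun j => MeasurableSet.iInter fun _ => ?_
  exact measurableSet_lt (measurable_pi_apply i) (measurable_pi_apply j)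

/-- Recursion in the number of variables at `a = 1`, by splitting the orthant according to which
coordinate is smallest. Points with a repeated minimum do not count, since the weight is zero there. -/
lemma SL_rec (n : ℕ) {k : ℝ} (hk : 0 < k) : SL (n + 1) k 1 = SL n k (2 * k + 1) := by
  set A : Fin (n + 1) → Set (Fin (n + 1) → ℝ) := fun i => {x | ∀ j, j ≠ i → x i < x j} with hA
  have hint : ∀ i, IntegrableOn ((A i).indicator (SLi (n + 1) k 1)) (Rplus (n + 1)) := fun i =>
    Integrable.indicator (SL_integrable hk one_pos) (measurableSet_strictMin i)
  have hsum : ∀ x, SLi (n + 1) k 1 x = ∑ i, (A i).indicator (SLi (n + 1) k 1) x := by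
    intro x
    obtain ⟨i, hi⟩ := Finite.exists_min x
    by_cases h : x ∈ A i
    · rw [Finset.sum_eq_single i, Set.indicator_of_mem h]
      · intro j _ hj
        refine Set.indicator_of_notMem (fun h2 => ?_) _
        exact absurd (h j hj) (not_lt.2 (h2 i (Ne.symm hj)).le)
      · simp
    · have h0 : SLi (n + 1) k 1 x = 0 := by
        simp only [hA, Set.mem_ofPred_eq, not_forall, not_lt] at h
        obtain ⟨j, hj, hij⟩ := h
        have hx0 : x i - x j = 0 := by linarith [hi j]
        rw [SLi, Wt, weps]
        refine mul_eq_zero_of_right _ (mul_eq_zero_of_right _ (Finset.prod_eq_zero (Finset.mem_univ i)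
          (Finset.prod_eq_zero (Finset.mem_univ j) ?_)))
        rw [if_neg (Ne.symm hj), hx0]
        simp [Real.zero_rpow (by positivity : k / 2 ≠ 0)]
      rw [h0]
      refine (Finset.sum_eq_zero fun j _ => ?_).symm
      rw [Set.indicator_apply]; split_ifs <;> simp [h0]
  have hone : ∀ i, ∫ x in Rplus (n + 1), (A i).indicator (SLi (n + 1) k 1) x =
      (1 / (n + 1 : ℝ)) * SL n k (2 * k + 1) := by
    intro i
    rw [integral_slice i, integral_prod _ (integrable_slice i (hint i))]
    rw [setIntegral_congr_fun measurableSet_Ioi fun t ht => SL_inner n hk ht i]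
    rw [integral_mul_const]
    congr 1
    have := integral_exp_mul_Ioi (a := -(n + 1 : ℝ)) (by linarith [(Nat.cast_nonneg n : (0:ℝ) ≤ n)]) 0
    rw [this]
    have : (n + 1 : ℝ) ≠ 0 := by positivity
    rw [mul_zero, Real.exp_zero, neg_div_neg_eq]
  have : SL (n + 1) k 1 = ∫ x in Rplus (n + 1), ∑ i, (A i).indicator (SLi (n + 1) k 1) x := by
    simp_rw [← hsum]; rfl
  rw [this, integral_finsetSum _ fun i _ => hint i]
  simp_rw [hone]
  simp
  field_simp

lemma SL_zero (k a : ℝ) : SL 0 k a = 1 := by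
  have : (volume : Measure (Fin 0 → ℝ)).restrict (Rplus 0) = Measure.dirac 0 := by
    have : Rplus 0 = Set.univ := by ext x; simp [Rplus]
    rw [this, Measure.restrict_univ]
    exact Measure.volume_pi_eq_dirac 0
  rw [SL, this]
  simp [Wt, weps]

/-- The product `∏_{j<n} Γ(a + jk)`, which is `Γ_n(a + k(n-1); k)`. -/
noncomputable def Gprod (n : ℕ) (k a : ℝ) : ℝ := ∏ j ∈ range n, Real.Gamma (a + j * k)

lemma Gprod_pos (n : ℕ) {k a : ℝ} (hk : 0 < k) (ha : 0 < a) : 0 < Gprod n k a :=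
  Finset.prod_pos fun j _ => Real.Gamma_pos_of_pos (by positivity)

/-- Bohr–Mollerup: `SL` and `Gprod` are log-convex in `a` and satisfy the same functional equation, so
their ratio does not depend on `a`. -/
lemma SL_eq_const {n : ℕ} {k : ℝ} (hk : 0 < k) {a : ℝ} (ha : 0 < a) :
    SL n k a / Gprod n k a = SL n k 1 / Gprod n k 1 := by
  have hf : ConvexOn ℝ (Set.Ioi 0) (fun a => Real.log (SL n k a)) := by
    refine convexOn_iff_forall_pos.mpr ⟨convex_Ioi _, fun x hx y hy r s hr hs hrs => ?_⟩
    have h1 := SL_pos (n := n) hk hx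
    have h2 := SL_pos (n := n) hk hy
    simp only [smul_eq_mul]
    rw [← Real.log_rpow h1, ← Real.log_rpow h2, ← Real.log_mul (by positivity) (by positivity)]
    refine Real.log_le_log (SL_pos hk ?_) (SL_log_convex hk hx hy hr hs hrs)
    have : 0 < x := hx
    have : 0 < y := hy
    positivity
  have hh : ConvexOn ℝ (Set.Ioi 0) (fun a => Real.log (Gprod n k a)) := by
    have h1 : ConvexOn ℝ (Set.Ioi 0) (fun a => ∑ j ∈ range n, Real.log (Real.Gamma (a + j * k))) := by
      have : ∀ m : ℕ, ConvexOn ℝ (Set.Ioi 0)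
          (fun a => ∑ j ∈ range m, Real.log (Real.Gamma (a + j * k))) := by
        intro m
        induction m with
        | zero => simpa using convexOn_const 0 (convex_Ioi (0 : ℝ))
        | succ m ih =>
          simp_rw [Finset.sum_range_succ]
          refine ih.add ?_
          have := (Real.convexOn_log_Gamma.translate_left (m * k)).subset
            (s := Set.Ioi 0) ?_ (convex_Ioi 0)
          · refine this.congr fun x _ => by simp
          · intro x hx
            have : 0 < x := hx
            simp only [Set.mem_preimage, Set.mem_Ioi]; positivity
      exact this n
    refine h1.congr fun x hx => ?_
    have : 0 < x := hx
    simp only [Gprod]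
    rw [Real.log_prod fun j _ => (Real.Gamma_pos_of_pos (by positivity)).ne']
  have hG : ∀ y, 0 < y → Gprod n k (y + 1) = (∏ j ∈ range n, (y + j * k)) * Gprod n k y := by
    intro y hy
    rw [Gprod, Gprod, ← Finset.prod_mul_distrib]
    refine Finset.prod_congr rfl fun j _ => ?_
    rw [← Real.Gamma_add_one (by positivity)]; congr 1; ring
  have hP : ∀ y, 0 < y → 0 < ∏ j ∈ range n, (y + j * k) := fun y hy =>
    Finset.prod_pos fun j _ => by positivity
  have h := convex_unique hf hh (δ := fun y => ∑ j ∈ range n, Real.log (y + j * k)) ?_ ?_ ?_ ha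
  · rw [← Real.log_div (SL_pos hk ha).ne' (Gprod_pos n hk ha).ne',
      ← Real.log_div (SL_pos hk one_pos).ne' (Gprod_pos n hk one_pos).ne'] at h
    exact Real.log_injOn_pos (div_pos (SL_pos hk ha) (Gprod_pos n hk ha))
      (div_pos (SL_pos hk one_pos) (Gprod_pos n hk one_pos)) h
  · intro y hy
    rw [SL_succ hk hy, hG y hy, Real.log_mul (hP y hy).ne' (SL_pos hk hy).ne',
      Real.log_mul (hP y hy).ne' (Gprod_pos n hk hy).ne']
    ring
  · intro y hy
    rw [hG y hy, Real.log_mul (hP y hy).ne' (Gprod_pos n hk hy).ne',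
      Real.log_prod fun j _ => by positivity]
    ring
  · simp only [← Finset.sum_sub_distrib]
    have : (0 : ℝ) = ∑ j ∈ range n, 0 := by simp
    rw [this]
    refine tendsto_finsetSum _ fun j _ => ?_
    have hb : Tendsto (fun m : ℕ => 1 / ((m : ℝ) + 1)) atTop (𝓝 0) :=
      tendsto_one_div_add_atTop_nhds_zero_nat
    refine squeeze_zero (fun m => ?_) (fun m => ?_) hb
    · rw [sub_nonneg]; exact Real.log_le_log (by positivity) (by linarith)
    · have h1 : (0 : ℝ) < m + 1 + j * k := by positivity
      have h2 : (0 : ℝ) < m + 2 + j * k := by positivity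
      rw [← Real.log_div h2.ne' h1.ne']
      refine (Real.log_le_sub_one_of_pos (by positivity)).trans ?_
      rw [show ((m : ℝ) + 2 + j * k) / (m + 1 + j * k) - 1 = 1 / (m + 1 + j * k) by field_simp; ring]
      have : 0 ≤ j * k := by positivity
      exact one_div_le_one_div_of_le (by positivity) (by linarith)

/-- The value of the Selberg–Laguerre integral. -/
lemma SL_formula (n : ℕ) {k : ℝ} (hk : 0 < k) : ∀ {a : ℝ}, 0 < a →
    SL n k a = dnk n k * Gprod n k a := by
  induction n with
  | zero => intro a _; simp [SL_zero, dnk, Gprod]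
  | succ n ih =>
    intro a ha
    have h := SL_eq_const (n := n + 1) hk ha
    rw [div_eq_div_iff (Gprod_pos _ hk ha).ne' (Gprod_pos _ hk one_pos).ne'] at h
    rw [SL_rec n hk, ih (a := 2 * k + 1) (by positivity)] at h
    -- multiplying both products by their missing Gamma factors gives `Gprod (n + 2) k 1`
    have e1 : Gprod (n + 1) k 1 * Real.Gamma (1 + (n + 1) * k) =
        Real.Gamma (1 + k) * Gprod n k (2 * k + 1) := by
      have h1 : Gprod (n + 1) k 1 * Real.Gamma (1 + (n + 1) * k) = Gprod (n + 2) k 1 := by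
        rw [Gprod, Gprod, Finset.prod_range_succ _ (n + 1)]; push_cast; rfl
      rw [h1, Gprod, Finset.prod_range_succ', Finset.prod_range_succ', Gprod]
      have : ∀ j : ℕ, 1 + ((j + 1 + 1 : ℕ) : ℝ) * k = 2 * k + 1 + j * k := fun j => by
        push_cast; ring
      simp only [this]
      simp; ring
    have e2 : dnk (n + 1) k * Real.Gamma (1 + k) = dnk n k * Real.Gamma (1 + (n + 1) * k) := by
      rw [dnk, Finset.prod_range_succ, ← dnk]
      have := (Real.Gamma_pos_of_pos (by positivity : 0 < 1 + k)).ne'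
      field_simp
    have p1 := Gprod_pos (n + 1) hk one_pos
    have p2 := Real.Gamma_pos_of_pos (by positivity : 0 < 1 + k)
    have p3 := Real.Gamma_pos_of_pos (by positivity : 0 < 1 + ((n : ℝ) + 1) * k)
    have : Gprod (n + 1) k 1 * Real.Gamma (1 + k) * (SL (n + 1) k a) =
        Gprod (n + 1) k 1 * Real.Gamma (1 + k) * (dnk (n + 1) k * Gprod (n + 1) k a) := by
      linear_combination Real.Gamma (1 + k) * h - Gprod (n+1) k 1 * Gprod (n+1) k a * e2
        - dnk n k * Gprod (n+1) k a * e1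
    exact mul_left_cancel₀ (mul_pos p1 p2).ne' this

/-! ### The Riesz family on the real axis and at `0` -/

lemma Gammank_real (n : ℕ) (k a : ℝ) :
    Gammank n k ((a + k * ((n : ℝ) - 1) : ℝ) : ℂ) = (Gprod n k a : ℂ) := by
  rw [Gammank, Gprod, ← Finset.prod_range_reflect]
  push_cast
  refine Finset.prod_congr rfl fun j hj => ?_
  have hj' := Finset.mem_range.1 hj
  rw [← Complex.Gamma_ofReal]
  congr 1
  have : ((n - 1 - j : ℕ) : ℂ) = (n : ℂ) - 1 - j := by
    rw [Nat.cast_sub (by omega), Nat.cast_sub (by omega)]; simp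
  rw [this]; push_cast; ring

/-- On the real half-line `μ > μ₀` the normalising constant of the Riesz family is `SL⁻¹`. -/
lemma riesz_real {n : ℕ} {k : ℝ} (hk : 0 < k) {R : ℂ → (SchwartzMap (Fin n → ℝ) ℂ →L[ℂ] ℂ)}
    (hR : IsRieszFamily n k R) {a : ℝ} (ha : 0 < a) (φ : SchwartzMap (Fin n → ℝ) ℂ) :
    R ((a + k * ((n : ℝ) - 1) : ℝ) : ℂ) φ =
      (SL n k a : ℂ)⁻¹ * ∫ x in Rplus n, φ x * (Wt n k 0 a x : ℂ) := by
  rw [hR.2 _ (by rw [Complex.ofReal_re]; linarith), Gammank_real, SL_formula n hk ha]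
  push_cast
  congr 1
  refine setIntegral_congr_fun (measurableSet_Rplus n) fun x hx => ?_
  simp only [Wt]
  rw [weps_zero n hk]
  push_cast
  rw [mul_assoc]
  congr 2
  refine Finset.prod_congr rfl fun i _ => ?_
  rw [Complex.ofReal_cpow (le_of_lt (hx i))]
  congr 1
  push_cast; ring

/-- An entire function that vanishes on `(M, ∞)` vanishes identically. -/
lemma entire_eq_zero {F : ℂ → ℂ} (hF : Differentiable ℂ F) (M : ℝ)
    (h : ∀ a : ℝ, 0 < a → F ((a + M : ℝ) : ℂ) = 0) (z : ℂ) : F z = 0 := by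
  have h1 : AnalyticOnNhd ℂ F Set.univ :=
    (Complex.analyticOnNhd_univ_iff_differentiable).2 hF
  have h2 : AnalyticOnNhd ℂ (fun _ : ℂ => (0 : ℂ)) Set.univ := analyticOnNhd_const
  have h3 : ∃ᶠ w in 𝓝[≠] ((1 + M : ℝ) : ℂ), F w = 0 := by
    have ht : Tendsto (fun m : ℕ => ((1 + M + 1 / ((m : ℝ) + 1) : ℝ) : ℂ)) atTop
        (𝓝[≠] ((1 + M : ℝ) : ℂ)) := by
      refine tendsto_nhdsWithin_iff.2 ⟨?_, Eventually.of_forall fun m => ?_⟩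
      · refine (Complex.continuous_ofReal.tendsto _).comp ?_
        simpa using tendsto_const_nhds.add (tendsto_one_div_add_atTop_nhds_zero_nat (𝕜 := ℝ))
      · have : (0 : ℝ) < 1 / ((m : ℝ) + 1) := by positivity
        simp only [Set.mem_compl_iff, Set.mem_singleton_iff, Complex.ofReal_inj]
        linarith
    refine ht.frequently (Eventually.of_forall fun m => ?_).frequently
    have := h (1 + 1 / ((m : ℝ) + 1)) (by positivity)
    rw [← this]; congr 2; ring
  exact congrFun (h1.eq_of_frequently_eq h2 h3) z

/-- `R 0` depends only on the values of the test function on the orthant. -/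
lemma riesz_zero_of_vanish {n : ℕ} {k : ℝ} (hk : 0 < k)
    {R : ℂ → (SchwartzMap (Fin n → ℝ) ℂ →L[ℂ] ℂ)}
    (hR : IsRieszFamily n k R) {φ : SchwartzMap (Fin n → ℝ) ℂ} (h : ∀ x ∈ Rplus n, φ x = 0) :
    R 0 φ = 0 := by
  refine entire_eq_zero (hR.1 φ) (k * ((n : ℝ) - 1)) (fun a ha => ?_) 0
  rw [riesz_real hk hR ha, setIntegral_congr_fun (g := fun _ => 0) (measurableSet_Rplus n)]
  · simp
  · intro x hx; simp [h x hx]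

lemma riesz_zero_exp {n : ℕ} {k : ℝ} (hk : 0 < k)
    {R : ℂ → (SchwartzMap (Fin n → ℝ) ℂ →L[ℂ] ℂ)}
    (hR : IsRieszFamily n k R) {φ : SchwartzMap (Fin n → ℝ) ℂ}
    (h : ∀ x ∈ Rplus n, φ x = Complex.exp (-∑ i, (x i : ℂ))) : R 0 φ = 1 := by
  have := entire_eq_zero (F := fun μ => R μ φ - 1) ((hR.1 φ).sub_const 1) (k * ((n : ℝ) - 1))
    (fun a ha => ?_) 0
  · exact sub_eq_zero.1 this
  · have h0 : (SL n k a : ℂ) ≠ 0 := by exact_mod_cast (SL_pos hk ha).ne'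
    rw [riesz_real hk hR ha, setIntegral_congr_fun
      (g := fun x => mono n ∅ x * (Wt n k 0 a x : ℂ)) (measurableSet_Rplus n), ← SL_ofReal,
      inv_mul_cancel₀ h0, sub_self]
    intro x hx
    simp [h x hx, mono]

/-- A smooth function on `ℝⁿ` that is `1` where all `x_i ≥ -1` and `0` where some `x_i ≤ -2`. -/
noncomputable def cutI (n : ℕ) (x : Fin n → ℝ) : ℂ :=
  ∏ i, (Real.smoothTransition (x i + 2) : ℂ)

lemma cutI_eq_one {n : ℕ} {x : Fin n → ℝ} (h : ∀ i, -1 ≤ x i) : cutI n x = 1 :=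
  Finset.prod_eq_one fun i _ => by
    rw [Real.smoothTransition.one_of_one_le (by linarith [h i])]; simp

lemma cutI_eq_zero {n : ℕ} {x : Fin n → ℝ} {i : Fin n} (h : x i ≤ -2) : cutI n x = 0 :=
  Finset.prod_eq_zero (Finset.mem_univ i) (by
    rw [Real.smoothTransition.zero_of_nonpos (by linarith)]; simp)

lemma smoothTransition_tg : Function.HasTemperateGrowth Real.smoothTransition := by
  refine .of_fderiv (k := 0) (C := 1) ?_ ?_ ?_
  · refine HasCompactSupport.hasTemperateGrowth ?_ ?_
    · refine HasCompactSupport.intro (K := Set.Icc 0 1) isCompact_Icc fun x hx => ?_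
      rw [Set.mem_Icc, not_and_or, not_le, not_le] at hx
      rcases hx with hx | hx
      · have : Real.smoothTransition =ᶠ[𝓝 x] fun _ => 0 := by
          filter_upwards [Iio_mem_nhds hx] with y hy
          exact Real.smoothTransition.zero_of_nonpos (le_of_lt hy)
        rw [this.fderiv_eq]; simp
      · have : Real.smoothTransition =ᶠ[𝓝 x] fun _ => 1 := by
          filter_upwards [Ioi_mem_nhds hx] with y hy
          exact Real.smoothTransition.one_of_one_le (le_of_lt hy)
        rw [this.fderiv_eq]; simp
    · exact Real.smoothTransition.contDiff.fderiv_right (m := (⊤ : ℕ∞)) (n := (⊤ : ℕ∞)) le_rfl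
  · exact (Real.smoothTransition.contDiff (n := (⊤ : ℕ∞))).differentiable (by simp)
  · intro x
    rw [Real.norm_of_nonneg (Real.smoothTransition.nonneg x)]
    simpa using Real.smoothTransition.le_one x

lemma cutI_tg (n : ℕ) : Function.HasTemperateGrowth (cutI n) := by
  have h1 : ∀ i : Fin n, Function.HasTemperateGrowth
      (fun x : Fin n → ℝ => (Real.smoothTransition (x i + 2) : ℂ)) := by
    intro i
    have h2 : Function.HasTemperateGrowth (fun x : Fin n → ℝ => x i + 2) :=
      (ContinuousLinearMap.proj (R := ℝ) (φ := fun _ : Fin n => ℝ) i).hasTemperateGrowth.add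
        (.const 2)
    exact Complex.ofRealCLM.hasTemperateGrowth.comp (smoothTransition_tg.comp h2)
  have : ∀ s : Finset (Fin n), Function.HasTemperateGrowth
      (fun x : Fin n → ℝ => ∏ i ∈ s, (Real.smoothTransition (x i + 2) : ℂ)) := by
    intro s
    induction s using Finset.induction_on with
    | empty => simp
    | insert i s hi ih =>
      simp_rw [Finset.prod_insert hi]
      exact (h1 i).mul ih
  exact this univ

/-- The linear form `-∑ xᵢ` on `ℝⁿ`. -/
noncomputable def negSum (n : ℕ) : (Fin n → ℝ) →L[ℝ] ℝ :=
  -∑ i, ContinuousLinearMap.proj (R := ℝ) (φ := fun _ : Fin n => ℝ) i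

lemma negSum_apply (n : ℕ) (x : Fin n → ℝ) : negSum n x = -∑ i, x i := by
  simp [negSum]

lemma exp_negSum_bound (n m : ℕ) (x : Fin n → ℝ) :
    ‖iteratedFDeriv ℝ m (fun x => ((Real.exp (negSum n x) : ℝ) : ℂ)) x‖ ≤
      Real.exp (-∑ i, x i) * ‖negSum n‖ ^ m := by
  have h0 : ContDiff ℝ m (fun t : ℝ => ((Real.exp t : ℝ) : ℂ)) :=
    Complex.ofRealCLM.contDiff.comp Real.contDiff_exp
  have h1 := (negSum n).iteratedFDeriv_comp_right h0 x (i := m) le_rfl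
  have h2 : (fun x => ((Real.exp (negSum n x) : ℝ) : ℂ)) =
      (fun t : ℝ => ((Real.exp t : ℝ) : ℂ)) ∘ (negSum n) := rfl
  rw [h2, h1]
  refine (ContinuousMultilinearMap.norm_compContinuousLinearMap_le _ _).trans ?_
  rw [Finset.prod_const, Finset.card_univ, Fintype.card_fin]
  gcongr
  rw [norm_iteratedFDeriv_eq_norm_iteratedDeriv]
  have : ∀ m, iteratedDeriv m (fun t : ℝ => ((Real.exp t : ℝ) : ℂ)) =
      fun t : ℝ => ((Real.exp t : ℝ) : ℂ) := by
    intro m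
    induction m with
    | zero => simp
    | succ m ih =>
      rw [iteratedDeriv_succ, ih]
      ext t
      exact (Real.hasDerivAt_exp t).ofReal_comp.deriv
  rw [this, negSum_apply]
  simp [Complex.norm_exp]

/-- The function `e^{-∑x_i}` on the orthant extends to a Schwartz function with value `1` at the
origin. -/
lemma exists_expSchwartz (n : ℕ) : ∃ e : SchwartzMap (Fin n → ℝ) ℂ,
    (∀ x ∈ Rplus n, e x = Complex.exp (-∑ i, (x i : ℂ))) ∧ e 0 = 1 := by
  have hE : ContDiff ℝ (⊤ : ℕ∞) (fun x : Fin n → ℝ => ((Real.exp (negSum n x) : ℝ) : ℂ)) :=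
    Complex.ofRealCLM.contDiff.comp (Real.contDiff_exp.comp (negSum n).contDiff)
  obtain ⟨hc1, hc2⟩ := cutI_tg n
  refine ⟨⟨fun x => cutI n x * ((Real.exp (negSum n x) : ℝ) : ℂ), hc1.mul hE, fun l m => ?_⟩,
    fun x hx => ?_, ?_⟩
  · choose K C hC using hc2
    set M : ℕ := ∑ i ∈ range (m + 1), K i with hM
    set A : ℝ := ∑ i ∈ range (m + 1), (m.choose i : ℝ) * |C i| * ‖negSum n‖ ^ (m - i) with hA
    have hA0 : 0 ≤ A := Finset.sum_nonneg fun i _ => by positivity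
    -- on the support of `cutI` the exponential dominates every power of the norm
    have hb : ∃ B : ℝ, ∀ x : Fin n → ℝ, (∀ i, -2 ≤ x i) →
        (1 + ‖x‖) ^ (l + M) * Real.exp (-∑ i, x i) ≤ B := by
      obtain ⟨C1, hC1, h1⟩ := prod_pow_le n (l + M)
      refine ⟨(3 ^ (l + M)) * (C1 * Real.exp (2 * n)), fun x hx => ?_⟩
      set y : Fin n → ℝ := fun i => x i + 2 with hy
      have hy0 : ∀ i, 0 ≤ y i := fun i => by simp only [hy]; linarith [hx i]
      have hxy : 1 + ‖x‖ ≤ 3 * ∏ i, (1 + y i) := by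
        have h3 : ‖x‖ ≤ 2 + ∏ i, (1 + y i) - 1 := by
          have hP : 1 ≤ ∏ i, (1 + y i) := one_le_prod_one_add hy0
          refine (pi_norm_le_iff_of_nonneg (by linarith)).2 fun i => ?_
          have h4 : 1 + y i ≤ ∏ i, (1 + y i) := by
            rw [← Finset.mul_prod_erase _ _ (Finset.mem_univ i)]
            have : 1 ≤ ∏ j ∈ univ.erase i, (1 + y j) :=
              Finset.one_le_prod fun i _ => by linarith [hy0 i]
            nlinarith [hy0 i]
          rw [Real.norm_eq_abs, abs_le]
          constructor
          · linarith [hx i]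
          · simp only [hy] at h4 ⊢; linarith
        have hP : 1 ≤ ∏ i, (1 + y i) := one_le_prod_one_add hy0
        linarith
      have hs : ∑ i, y i = ∑ i, x i + 2 * n := by
        simp [hy, Finset.sum_add_distrib]; ring
      have h5 : Real.exp (-∑ i, x i) = Real.exp (-(∑ i, y i) / 2) *
          (Real.exp (-(∑ i, y i) / 2) * Real.exp (2 * n)) := by
        rw [← Real.exp_add, ← Real.exp_add, hs]; congr 1; ring
      have h6 := h1 y hy0
      have h7 : 0 ≤ ∑ i, y i := Finset.sum_nonneg fun i _ => hy0 i
      calc (1 + ‖x‖) ^ (l + M) * Real.exp (-∑ i, x i)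
          ≤ (3 * ∏ i, (1 + y i)) ^ (l + M) * Real.exp (-∑ i, x i) := by gcongr
        _ = 3 ^ (l + M) * (((∏ i, (1 + y i)) ^ (l + M) * Real.exp (-(∑ i, y i) / 2)) *
            (Real.exp (-(∑ i, y i) / 2) * Real.exp (2 * n))) := by rw [h5, mul_pow]; ring
        _ ≤ 3 ^ (l + M) * (C1 * (1 * Real.exp (2 * n))) := by
            gcongr
            · refine h6.trans ?_
              have : Real.exp (-(∑ i, y i) / 4) ≤ 1 := Real.exp_le_one_iff.2 (by linarith)
              nlinarith
            · exact Real.exp_le_one_iff.2 (by linarith)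
        _ = _ := by ring
    obtain ⟨B, hB⟩ := hb
    refine ⟨max 0 (A * B), fun x => ?_⟩
    by_cases hx : ∀ i, -2 ≤ x i
    · refine le_max_of_le_right ?_
      have h1 := norm_iteratedFDeriv_mul_le (n := m) (N := (⊤ : ℕ∞)) hc1 hE x (by exact_mod_cast le_top)
      have h2 : ‖iteratedFDeriv ℝ m (fun x => cutI n x * ((Real.exp (negSum n x) : ℝ) : ℂ)) x‖ ≤
          A * (1 + ‖x‖) ^ M * Real.exp (-∑ i, x i) := by
        refine h1.trans ?_
        rw [hA, Finset.sum_mul, Finset.sum_mul]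
        refine Finset.sum_le_sum fun i hi => ?_
        have h3 : ‖iteratedFDeriv ℝ i (cutI n) x‖ ≤ |C i| * (1 + ‖x‖) ^ M := by
          refine (hC i x).trans ?_
          have : (1 + ‖x‖) ^ K i ≤ (1 + ‖x‖) ^ M :=
            pow_le_pow_right₀ (by linarith [norm_nonneg x])
              (Finset.single_le_sum (f := K) (fun _ _ => Nat.zero_le _) hi)
          exact mul_le_mul (le_abs_self _) this (by positivity) (by positivity)
        have h4 := exp_negSum_bound n (m - i) x
        calc _ ≤ (m.choose i : ℝ) * (|C i| * (1 + ‖x‖) ^ M) *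
              (Real.exp (-∑ i, x i) * ‖negSum n‖ ^ (m - i)) := by gcongr
          _ = _ := by ring
      calc _ ≤ (1 + ‖x‖) ^ l * (A * (1 + ‖x‖) ^ M * Real.exp (-∑ i, x i)) := by
            gcongr; linarith
        _ = A * ((1 + ‖x‖) ^ (l + M) * Real.exp (-∑ i, x i)) := by rw [pow_add]; ring
        _ ≤ A * B := by gcongr; exact hB x hx
    · push Not at hx
      obtain ⟨i, hi⟩ := hx
      have : (fun x => cutI n x * ((Real.exp (negSum n x) : ℝ) : ℂ)) =ᶠ[𝓝 x] fun _ => 0 := by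
        filter_upwards [(isOpen_Iio.preimage (continuous_apply i)).mem_nhds hi] with y hy
        rw [cutI_eq_zero (le_of_lt hy), zero_mul]
      refine le_max_of_le_left ?_
      rw [(Filter.EventuallyEq.iteratedFDeriv ℝ this m).eq_of_nhds]
      simp
  · change cutI n x * ((Real.exp (negSum n x) : ℝ) : ℂ) = _
    rw [cutI_eq_one fun i => by linarith [hx i], negSum_apply]
    push_cast; simp
  · change cutI n 0 * ((Real.exp (negSum n 0) : ℝ) : ℂ) = _
    rw [cutI_eq_one fun i => by simp]; simp

/-! ### Polynomials times functions of the coordinate sum -/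

/-- `x_i - x_j` divides `x_i f - x_j f∘σ_ij`. -/
lemma exists_quot_aux {n : ℕ} (i j : Fin n) (f : MvPolynomial (Fin n) ℂ) :
    ∃ q : MvPolynomial (Fin n) ℂ, MvPolynomial.X i * f -
      MvPolynomial.X j * MvPolynomial.rename (Equiv.swap i j) f =
      (MvPolynomial.X i - MvPolynomial.X j) * q := by
  induction f using MvPolynomial.induction_on with
  | C a => exact ⟨MvPolynomial.C a, by rw [MvPolynomial.rename_C]; ring⟩
  | add p q hp hq =>
    obtain ⟨p', hp⟩ := hp
    obtain ⟨q', hq⟩ := hq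
    exact ⟨p' + q', by rw [map_add]; linear_combination hp + hq⟩
  | mul_X p l hp =>
    obtain ⟨p', hp⟩ := hp
    rw [map_mul, MvPolynomial.rename_X]
    set s := MvPolynomial.rename (Equiv.swap i j) p
    by_cases hi : l = i
    · subst hi
      rw [Equiv.swap_apply_left]
      exact ⟨MvPolynomial.X l * p' + MvPolynomial.X j * s, by
        linear_combination MvPolynomial.X l * hp⟩
    · by_cases hj : l = j
      · subst hj
        rw [Equiv.swap_apply_right]
        exact ⟨MvPolynomial.X l * p' - MvPolynomial.X l * s, by
          linear_combination MvPolynomial.X l * hp⟩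
      · rw [Equiv.swap_apply_of_ne_of_ne hi hj]
        exact ⟨MvPolynomial.X l * p', by linear_combination MvPolynomial.X l * hp⟩

lemma homogeneousComponent_linear_mul {n : ℕ} {l q : MvPolynomial (Fin n) ℂ}
    (hl : l.IsHomogeneous 1) (d : ℕ) : MvPolynomial.homogeneousComponent (d + 1) (l * q) =
      l * MvPolynomial.homogeneousComponent d q := by
  conv_lhs => rw [← MvPolynomial.sum_homogeneousComponent q, Finset.mul_sum, map_sum]
  have h : ∀ e, MvPolynomial.homogeneousComponent (d + 1)
      (l * MvPolynomial.homogeneousComponent e q) =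
      if d = e then l * MvPolynomial.homogeneousComponent e q else 0 := by
    intro e
    have := hl.mul (MvPolynomial.homogeneousComponent_isHomogeneous e q)
    rw [MvPolynomial.homogeneousComponent_of_mem this]
    congr 1
    simp [add_comm 1 e]
  simp_rw [h]
  rw [Finset.sum_ite_eq]
  split_ifs with hd
  · rfl
  · rw [MvPolynomial.homogeneousComponent_eq_zero _ _ (by simpa using hd), mul_zero]

/-- The divided difference `(x_i f - x_j f∘σ_{ij}) / (x_i - x_j)` of a homogeneous polynomial is a
homogeneous polynomial of the same degree. -/
lemma exists_quot {n d : ℕ} (i j : Fin n) {f : MvPolynomial (Fin n) ℂ} (hf : f.IsHomogeneous d) :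
    ∃ q : MvPolynomial (Fin n) ℂ, q.IsHomogeneous d ∧ MvPolynomial.X i * f -
      MvPolynomial.X j * MvPolynomial.rename (Equiv.swap i j) f =
      (MvPolynomial.X i - MvPolynomial.X j) * q := by
  obtain ⟨q, hq⟩ := exists_quot_aux i j f
  refine ⟨MvPolynomial.homogeneousComponent d q,
    MvPolynomial.homogeneousComponent_isHomogeneous d q, ?_⟩
  have hl : (MvPolynomial.X i - MvPolynomial.X j : MvPolynomial (Fin n) ℂ).IsHomogeneous 1 :=
    (MvPolynomial.isHomogeneous_X _ _).sub (MvPolynomial.isHomogeneous_X _ _)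
  have h1 : (MvPolynomial.X i * f -
      MvPolynomial.X j * MvPolynomial.rename (Equiv.swap i j) f).IsHomogeneous (d + 1) := by
    rw [add_comm d 1]
    exact ((MvPolynomial.isHomogeneous_X _ _).mul hf).sub
      ((MvPolynomial.isHomogeneous_X _ _).mul hf.rename_isHomogeneous)
  rw [← homogeneousComponent_linear_mul hl, ← hq]
  exact (MvPolynomial.homogeneousComponent_eq_self h1).symm

/-- Evaluation of a complex polynomial at a real point. -/
noncomputable def ev {n : ℕ} (p : MvPolynomial (Fin n) ℂ) (x : Fin n → ℝ) : ℂ :=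
  MvPolynomial.eval (fun i => (x i : ℂ)) p

lemma ev_contDiff {n : ℕ} (p : MvPolynomial (Fin n) ℂ) : ContDiff ℝ (⊤ : ℕ∞) (ev p) := by
  induction p using MvPolynomial.induction_on with
  | C a => 
    have : ev (MvPolynomial.C a) = fun _ : Fin n → ℝ => a := by ext x; simp [ev]
    rw [this]; exact contDiff_const
  | add p q hp hq =>
    have : ev (p + q) = fun x => ev p x + ev q x := by ext x; simp [ev]
    rw [this]; exact hp.add hq
  | mul_X p l hp =>
    have : ev (p * MvPolynomial.X l) = fun x => ev p x * (x l : ℂ) := by ext x; simp [ev]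
    rw [this]
    exact hp.mul (Complex.ofRealCLM.contDiff.comp (contDiff_apply ℝ ℝ l))

lemma ev_hasDerivAt {n : ℕ} (p : MvPolynomial (Fin n) ℂ) (i : Fin n) (x : Fin n → ℝ) :
    HasDerivAt (fun t => ev p (Function.update x i t)) (ev (MvPolynomial.pderiv i p) x) (x i) := by
  induction p using MvPolynomial.induction_on with
  | C a => simpa [ev] using hasDerivAt_const (x i) a
  | add p q hp hq =>
    have h := hp.add hq
    have e1 : (fun t => ev (p + q) (Function.update x i t)) =
        (fun t => ev p (Function.update x i t)) + fun t => ev q (Function.update x i t) := by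
      ext t; simp [ev]
    rw [e1]
    refine h.congr_deriv ?_
    simp [ev]
  | mul_X p l hp =>
    have h1 : HasDerivAt (fun t => ((Function.update x i t l : ℝ) : ℂ))
        (if l = i then 1 else 0) (x i) := by
      split_ifs with h
      · subst h; simpa using (hasDerivAt_id (x l)).ofReal_comp
      · simpa [Function.update_of_ne h] using hasDerivAt_const (x i) (x l : ℂ)
    have h2 := hp.mul h1
    simp only [Function.update_eq_self] at h2
    have e1 : (fun t => ev (p * MvPolynomial.X l) (Function.update x i t)) =
        (fun t => ev p (Function.update x i t)) * fun t => ((Function.update x i t l : ℝ) : ℂ) := by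
      ext t; simp [ev]
    rw [e1]
    refine h2.congr_deriv ?_
    rw [Derivation.leibniz, MvPolynomial.pderiv_X]
    by_cases h : l = i
    · subst h; simp [ev]; ring
    · simp [ev, h]; ring

/-- Smooth functions `ℝ → ℂ` vanishing on some half-line `[B, ∞)`. -/
@[ext]
structure GG where
  fn : ℝ → ℂ
  smooth : ContDiff ℝ (⊤ : ℕ∞) fn
  vanish : ∃ B, ∀ s, B ≤ s → fn s = 0

lemma Srep_support {n : ℕ} (p : MvPolynomial (Fin n) ℂ) (g : GG) :
    HasCompactSupport (fun x : Fin n → ℝ => ev p x * g.fn (∑ i, x i) * cutI n x) := by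
  obtain ⟨B, hB⟩ := g.vanish
  refine HasCompactSupport.intro (K := Set.Icc (fun _ => -2) (fun _ => B + 2 * n)) isCompact_Icc
    fun x hx => ?_
  by_cases h : ∀ i, -2 < x i
  · have hx' : ∃ i, B + 2 * n < x i := by
      by_contra hcon
      push Not at hcon
      exact hx ⟨fun i => (h i).le, hcon⟩
    obtain ⟨i, hi⟩ := hx'
    rw [hB, mul_zero, zero_mul]
    rw [← Finset.add_sum_erase _ _ (Finset.mem_univ i)]
    have h1 : ∑ j ∈ univ.erase i, (-2 : ℝ) ≤ ∑ j ∈ univ.erase i, x j :=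
      Finset.sum_le_sum fun j _ => (h j).le
    have h2 : ∑ j ∈ univ.erase i, (-2 : ℝ) ≥ -(2 * n) := by
      rw [Finset.sum_const, nsmul_eq_mul]
      have : ((univ.erase i).card : ℝ) ≤ n := by
        have := Finset.card_le_univ (univ.erase i)
        rw [Fintype.card_fin] at this
        exact_mod_cast this
      linarith
    linarith
  · push Not at h
    obtain ⟨i, hi⟩ := h
    rw [cutI_eq_zero hi, mul_zero]

lemma sum_contDiff (n : ℕ) : ContDiff ℝ (⊤ : ℕ∞) (fun x : Fin n → ℝ => ∑ i, x i) :=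
  ContDiff.sum fun i _ => contDiff_apply ℝ ℝ i

/-- The Schwartz function `p(x) g(x₁ + ⋯ + xₙ) χ(x)`, where `χ = cutI n` equals `1` on the
orthant; it is linear in `p`. -/
noncomputable def Srep {n : ℕ} (g : GG) :
    MvPolynomial (Fin n) ℂ →ₗ[ℂ] SchwartzMap (Fin n → ℝ) ℂ where
  toFun p := (Srep_support p g).toSchwartzMap
    (((ev_contDiff p).mul (g.smooth.comp (sum_contDiff n))).mul (cutI_tg n).1)
  map_add' p q := by ext x; simp [ev]; ring
  map_smul' c p := by ext x; simp [ev]; ring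

lemma Srep_apply {n : ℕ} (g : GG) (p : MvPolynomial (Fin n) ℂ) (x : Fin n → ℝ) :
    Srep g p x = ev p x * g.fn (∑ i, x i) * cutI n x := rfl

lemma Srep_Rplus {n : ℕ} (g : GG) (p : MvPolynomial (Fin n) ℂ) {x : Fin n → ℝ}
    (hx : x ∈ Rplus n) : Srep g p x = ev p x * g.fn (∑ i, x i) := by
  rw [Srep_apply, cutI_eq_one fun i => by linarith [hx i], mul_one]

lemma expBd_Srep {n : ℕ} (g : GG) (p : MvPolynomial (Fin n) ℂ) :
    ∃ C : ℝ, 0 ≤ C ∧ ExpBd n C (fun x => ev p x * g.fn (∑ i, x i)) := by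
  obtain ⟨B, hB⟩ := g.vanish
  have hc : Continuous fun x : Fin n → ℝ =>
      ‖ev p x * g.fn (∑ i, x i)‖ * Real.exp ((∑ i, x i) / 2) := by
    have h1 := (ev_contDiff p).continuous
    have h2 := g.smooth.continuous
    fun_prop
  obtain ⟨C, hC⟩ := (isCompact_Icc (a := (0 : Fin n → ℝ)) (b := fun _ => B)).bddAbove_image
    hc.continuousOn
  refine ⟨max C 0, le_max_right _ _, fun x hx => ?_⟩
  by_cases hxB : ∀ i, x i ≤ B
  · have := hC (Set.mem_image_of_mem _ (⟨fun i => (hx i).le, hxB⟩ : x ∈ Set.Icc _ _))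
    rw [neg_div, Real.exp_neg, ← div_eq_mul_inv, le_div_iff₀ (Real.exp_pos _)]
    exact this.trans (le_max_left _ _)
  · push Not at hxB
    obtain ⟨i, hi⟩ := hxB
    have : B ≤ ∑ i, x i := hi.le.trans
      (Finset.single_le_sum (f := x) (fun j _ => (hx j).le) (Finset.mem_univ i))
    simp only
    rw [hB _ this, mul_zero, norm_zero]
    positivity

/-- The derivative of an element of `GG`. -/
noncomputable def GG.der (g : GG) : GG :=
  ⟨deriv g.fn, by
    have := g.smooth
    exact (contDiff_infty_iff_deriv.1 this).2, by
    obtain ⟨B, hB⟩ := g.vanish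
    refine ⟨B + 1, fun s hs => ?_⟩
    have : g.fn =ᶠ[𝓝 s] fun _ => 0 := by
      filter_upwards [Ioi_mem_nhds (show B < s by linarith)] with y hy
      exact hB y (le_of_lt hy)
    rw [this.deriv_eq]; simp⟩

lemma GG.hasDerivAt (g : GG) (s : ℝ) : HasDerivAt g.fn (g.der.fn s) s :=
  ((g.smooth.differentiable (by simp)) s).hasDerivAt

/-- Every element of `GG` has an antiderivative in `GG`. -/
lemma GG.exists_antideriv (g : GG) : ∃ h : GG, h.der = g := by
  obtain ⟨B, hB⟩ := g.vanish
  have hd : ∀ s, HasDerivAt (fun s => ∫ t in B..s, g.fn t) (g.fn s) s := fun s =>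
    intervalIntegral.integral_hasDerivAt_right (g.smooth.continuous.intervalIntegrable _ _)
      (g.smooth.continuous.stronglyMeasurableAtFilter _ _) g.smooth.continuous.continuousAt
  have hd' : deriv (fun s => ∫ t in B..s, g.fn t) = g.fn := funext fun s => (hd s).deriv
  refine ⟨⟨fun s => ∫ t in B..s, g.fn t, ?_, B, fun s hs => ?_⟩, GG.ext hd'⟩
  · exact contDiff_infty_iff_deriv.2 ⟨fun s => (hd s).differentiableAt, by rw [hd']; exact g.smooth⟩
  · rw [intervalIntegral.integral_congr (g := fun _ => (0 : ℂ))]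
    · simp
    · intro t ht
      rw [Set.uIcc_of_le hs] at ht
      exact hB t ht.1

/-! ### Vanishing on polynomials -/

lemma ExpBd.mono {n : ℕ} {C D : ℝ} {f : (Fin n → ℝ) → ℂ} (h : ExpBd n C f) (hCD : C ≤ D) :
    ExpBd n D f := fun x hx => (h x hx).trans (by gcongr)

lemma sum_update {n : ℕ} (x : Fin n → ℝ) (i : Fin n) (t : ℝ) :
    ∑ j, Function.update x i t j = t + ∑ j ∈ univ.erase i, x j := by
  rw [← Finset.add_sum_erase _ _ (Finset.mem_univ i), Function.update_self]
  congr 1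
  exact Finset.sum_congr rfl fun j hj => Function.update_of_ne (Finset.ne_of_mem_erase hj) _ _

/-- The identity `ibp` for `f(x) = p(x) g(∑ xᵢ)`, continued to `μ = 0`: there the coefficient
`a = μ - μ₀` becomes `-k(n-1)`. -/
lemma riesz_step {n : ℕ} {k : ℝ} (hk : 0 < k) {R : ℂ → (SchwartzMap (Fin n → ℝ) ℂ →L[ℂ] ℂ)}
    (hR : IsRieszFamily n k R) (g : GG) (i : Fin n) (f : MvPolynomial (Fin n) ℂ)
    (Q : Fin n → MvPolynomial (Fin n) ℂ) (hQi : Q i = 0)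
    (hQ : ∀ j, j ≠ i → MvPolynomial.X i * f -
      MvPolynomial.X j * MvPolynomial.rename (Equiv.swap i j) f =
      (MvPolynomial.X i - MvPolynomial.X j) * Q j) :
    R 0 (Srep g.der (MvPolynomial.X i * f)) =
      (k * ((n : ℝ) - 1) : ℝ) * R 0 (Srep g f) -
        R 0 (Srep g (MvPolynomial.X i * MvPolynomial.pderiv i f)) -
        k * ∑ j, R 0 (Srep g (Q j)) := by
  set M : ℝ := k * ((n : ℝ) - 1) with hM
  have key := entire_eq_zero (F := fun μ => (μ - (M : ℂ)) * R μ (Srep g f) +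
    R μ (Srep g (MvPolynomial.X i * MvPolynomial.pderiv i f)) +
    R μ (Srep g.der (MvPolynomial.X i * f)) + k * ∑ j, R μ (Srep g (Q j))) ?_ M ?_ 0
  · linear_combination key
  · have h := hR.1
    refine (((((differentiable_id.sub_const _).mul (h _))).add (h _)).add (h _)).add ?_
    exact (Differentiable.fun_sum fun j _ => h _).const_mul _
  · intro a ha
    have e1 : ∀ μ : ℂ, (μ - (M : ℂ)) * R μ (Srep g f) +
        R μ (Srep g (MvPolynomial.X i * MvPolynomial.pderiv i f)) +
        R μ (Srep g.der (MvPolynomial.X i * f)) + k * ∑ j, R μ (Srep g (Q j)) =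
        R μ ((μ - (M : ℂ)) • Srep g f + Srep g (MvPolynomial.X i * MvPolynomial.pderiv i f) +
          Srep g.der (MvPolynomial.X i * f) + (k : ℂ) • ∑ j, Srep g (Q j)) := by
      intro μ; simp [map_sum]
    rw [e1, riesz_real hk hR ha]
    refine mul_eq_zero_of_right _ ?_
    obtain ⟨C1, h10, h1⟩ := expBd_Srep g f
    obtain ⟨C2, h20, h2⟩ := expBd_Srep g (MvPolynomial.pderiv i f)
    obtain ⟨C3, h30, h3⟩ := expBd_Srep g.der f
    choose C4 h40 h4 using fun j => expBd_Srep g (Q j)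
    have hS : 0 ≤ ∑ j, C4 j := Finset.sum_nonneg fun j _ => h40 j
    have hcont : ∀ (g : GG) (p : MvPolynomial (Fin n) ℂ),
        Continuous fun x : Fin n → ℝ => ev p x * g.fn (∑ i, x i) := by
      intro g p
      have h1 := (ev_contDiff p).continuous
      have h2 := g.smooth.continuous
      fun_prop
    have hibp := ibp hk ha i (C := C1 + (C2 + C3) + ∑ j, C4 j)
      (f := fun x => ev f x * g.fn (∑ i, x i))
      (f' := fun x => ev (MvPolynomial.pderiv i f) x * g.fn (∑ i, x i) +
        ev f x * g.der.fn (∑ i, x i))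
      (q := fun j x => ev (Q j) x * g.fn (∑ i, x i))
      (hcont _ _).measurable ((hcont _ _).add (hcont _ _)).measurable
      (fun j => (hcont _ _).measurable) (h1.mono (by linarith)) ?_ ?_ ?_ ?_ ?_
    · rw [← hibp]
      refine setIntegral_congr_fun (measurableSet_Rplus n) fun x hx => ?_
      simp only [add_apply, smul_apply, _root_.sum_apply,
        Srep_Rplus _ _ hx, smul_eq_mul]
      have e2 : ∀ q, ev (MvPolynomial.X i * q) x = (x i : ℂ) * ev q x := fun q => by simp [ev]
      rw [e2, e2]
      congr 1
      push_cast
      ring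
    · intro x hx
      refine (norm_add_le _ _).trans ((add_le_add (h2 x hx) (h3 x hx)).trans ?_)
      rw [← add_mul]
      exact mul_le_mul_of_nonneg_right (by linarith) (Real.exp_pos _).le
    · intro j
      refine (h4 j).mono ?_
      have := Finset.single_le_sum (f := C4) (fun j _ => h40 j) (Finset.mem_univ j)
      linarith
    · intro x _
      have d1 := ev_hasDerivAt f i x
      have d2 : HasDerivAt (fun t => g.fn (∑ j, Function.update x i t j))
          (g.der.fn (∑ j, x j)) (x i) := by
        simp_rw [sum_update]
        have : ∑ j, x j = x i + ∑ j ∈ univ.erase i, x j :=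
          (Finset.add_sum_erase _ _ (Finset.mem_univ i)).symm
        rw [this]
        exact (g.hasDerivAt _).comp_add_const _ _
      have := d1.mul d2
      simp only [Function.update_eq_self] at this
      exact this
    · intro j x _
      by_cases hj : j = i
      · subst hj; simp
      · have h5 : ∑ l, (x ∘ Equiv.swap i j) l = ∑ l, x l := Equiv.sum_comp (Equiv.swap i j) x
        have h6 := congrArg (fun p => ev p x) (hQ j hj)
        have h7 : ev (MvPolynomial.rename (Equiv.swap i j) f) x = ev f (x ∘ Equiv.swap i j) := by
          simp only [ev, MvPolynomial.eval_rename]; rfl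
        have h8 : (x i : ℂ) * ev f x - x j * ev f (x ∘ Equiv.swap i j) =
            ((x i : ℂ) - x j) * ev (Q j) x := by
          rw [← h7]; simpa [ev] using h6
        simp only [h5]
        push_cast
        linear_combination g.fn (∑ l, x l) * h8
    · ext x; simp [hQi, ev]

/-- `R 0` annihilates `p(x) g(∑ xᵢ)` for `p` homogeneous of positive degree. -/
lemma riesz_poly {n : ℕ} {k : ℝ} (hk : 0 < k) {R : ℂ → (SchwartzMap (Fin n → ℝ) ℂ →L[ℂ] ℂ)}
    (hR : IsRieszFamily n k R) (d : ℕ) : ∀ (p : MvPolynomial (Fin n) ℂ),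
    p.IsHomogeneous (d + 1) → ∀ g : GG, R 0 (Srep g p) = 0 := by
  -- by Euler's identity it suffices to treat each `X i * ∂ᵢ p`
  have euler : ∀ d (p : MvPolynomial (Fin n) ℂ), p.IsHomogeneous (d + 1) → ∀ g : GG,
      (∀ i, R 0 (Srep g (MvPolynomial.X i * MvPolynomial.pderiv i p)) = 0) →
      R 0 (Srep g p) = 0 := by
    intro d p hp g h
    have h1 := congrArg (fun q => R 0 (Srep g q)) hp.sum_X_mul_pderiv
    simp only [map_sum, h, Finset.sum_const_zero, map_nsmul] at h1
    have : ((d + 1 : ℕ) : ℂ) ≠ 0 := by exact_mod_cast Nat.succ_ne_zero d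
    rw [nsmul_eq_mul] at h1
    exact (mul_eq_zero.1 h1.symm).resolve_left this
  induction d with
  | zero =>
    intro p hp g
    obtain ⟨h, rfl⟩ := g.exists_antideriv
    refine euler 0 p hp _ fun i => ?_
    obtain ⟨c, hc⟩ : ∃ c, MvPolynomial.pderiv i p = MvPolynomial.C c := by
      have := hp.pderiv (i := i)
      exact ⟨_, MvPolynomial.totalDegree_eq_zero_iff_eq_C.1
        ((MvPolynomial.totalDegree_zero_iff_isHomogeneous _).2 this)⟩
    rw [hc]
    have := riesz_step hk hR h i (MvPolynomial.C c)
      (fun j => if j = i then 0 else MvPolynomial.C c) (by simp) fun j hj => by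
        rw [MvPolynomial.rename_C, if_neg hj]; ring
    rw [this, MvPolynomial.pderiv_C, mul_zero, map_zero, map_zero]
    have h2 : ∑ j, R 0 (Srep h (if j = i then 0 else MvPolynomial.C c)) =
        ((n : ℂ) - 1) * R 0 (Srep h (MvPolynomial.C c)) := by
      rw [← Finset.add_sum_erase _ _ (Finset.mem_univ i)]
      rw [Finset.sum_congr rfl (g := fun _ => R 0 (Srep h (MvPolynomial.C c)))
        fun j hj => by rw [if_neg (Finset.ne_of_mem_erase hj)]]
      have : 1 ≤ n := by have := i.2; omega
      simp [Finset.card_erase_of_mem, Nat.cast_sub this]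
    rw [h2]
    push_cast
    ring
  | succ d ih =>
    intro p hp g
    obtain ⟨h, rfl⟩ := g.exists_antideriv
    refine euler (d + 1) p hp _ fun i => ?_
    have hf : (MvPolynomial.pderiv i p).IsHomogeneous (d + 1) := hp.pderiv
    choose q hq1 hq2 using fun j => exists_quot i j hf
    have := riesz_step hk hR h i (MvPolynomial.pderiv i p)
      (fun j => if j = i then 0 else q j) (by simp) fun j hj => by rw [if_neg hj]; exact hq2 j
    rw [this, ih _ hf, ih]
    · rw [Finset.sum_eq_zero]
      · simp
      · intro j _
        split_ifs
        · simp
        · exact ih _ (hq1 j) h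
    · have := (MvPolynomial.isHomogeneous_X ℂ i).mul (hf.pderiv (i := i))
      convert this using 1
      simp [add_comm]

/-! ### Fourier transforms and exponential remainders -/

/-- The remainder of order `N` of the exponential series. -/
noncomputable def expRem (N : ℕ) (z : ℂ) : ℂ :=
  Complex.exp z - ∑ d ∈ range N, z ^ d / (d.factorial : ℂ)

lemma expRem_hasDerivAt (N : ℕ) (z : ℂ) : HasDerivAt (expRem N) (expRem (N - 1) z) z := by
  unfold expRem
  refine (Complex.hasDerivAt_exp z).sub ?_
  rcases N with _ | N
  · simpa using hasDerivAt_const z (0 : ℂ)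
  · have h : HasDerivAt (fun z : ℂ => ∑ d ∈ range (N + 1), z ^ d / (d.factorial : ℂ))
        (∑ d ∈ range (N + 1), (d : ℂ) * z ^ (d - 1) / (d.factorial : ℂ)) z :=
      HasDerivAt.fun_sum fun d _ => (hasDerivAt_pow d z).div_const _
    refine h.congr_deriv ?_
    rw [Finset.sum_range_succ']
    simp only [Nat.cast_zero, zero_mul, zero_div, add_zero, Nat.add_sub_cancel]
    refine Finset.sum_congr rfl fun d _ => ?_
    have : (d.factorial : ℂ) ≠ 0 := by exact_mod_cast d.factorial_ne_zero
    have : (d + 1 : ℂ) ≠ 0 := by exact_mod_cast d.succ_ne_zero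
    rw [Nat.factorial_succ]
    push_cast
    field_simp

lemma expRem_continuous (N : ℕ) : Continuous (expRem N) :=
  continuous_iff_continuousAt.2 fun z => (expRem_hasDerivAt N z).continuousAt

/-- The remainder of order `N` of the real exponential series. -/
noncomputable def expTail (N : ℕ) (r : ℝ) : ℝ :=
  Real.exp r - ∑ d ∈ range N, r ^ d / (d.factorial : ℝ)

lemma expTail_eq (N : ℕ) (r : ℝ) : (expTail N r : ℂ) = expRem N r := by
  simp [expTail, expRem]

lemma expTail_nonneg (N : ℕ) {r : ℝ} (hr : 0 ≤ r) : 0 ≤ expTail N r :=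
  sub_nonneg.2 (Real.sum_le_exp_of_nonneg hr N)

lemma expTail_hasDerivAt (N : ℕ) (r : ℝ) : HasDerivAt (expTail N) (expTail (N - 1) r) r := by
  have h := (expRem_hasDerivAt N r).real_of_complex
  rw [← expTail_eq] at h
  refine (h.congr_deriv (by simp)).congr_of_eventuallyEq (.of_forall fun s => ?_)
  simp [← expTail_eq]

lemma expTail_mono (N : ℕ) : MonotoneOn (expTail N) (Set.Ici 0) := by
  refine monotoneOn_of_deriv_nonneg (convex_Ici 0)
    (fun x _ => (expTail_hasDerivAt N x).continuousAt.continuousWithinAt)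
    (fun x _ => (expTail_hasDerivAt N x).differentiableAt.differentiableWithinAt) fun x hx => ?_
  rw [(expTail_hasDerivAt N x).deriv]
  rw [interior_Ici] at hx
  exact expTail_nonneg _ hx.le

lemma norm_expRem_le (N : ℕ) {z : ℂ} {r : ℝ} (h : ‖z‖ ≤ r) : ‖expRem N z‖ ≤ expTail N r :=
  (Complex.norm_exp_sub_sum_le_exp_norm_sub_sum z N).trans
    (expTail_mono N (norm_nonneg z) ((norm_nonneg z).trans h) h)

lemma expTail_le_exp (N : ℕ) {r : ℝ} (hr : 0 ≤ r) : expTail N r ≤ Real.exp r := by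
  have : 0 ≤ ∑ d ∈ range N, r ^ d / (d.factorial : ℝ) := Finset.sum_nonneg fun d _ => by positivity
  unfold expTail; linarith

lemma expTail_tendsto (r : ℝ) : Tendsto (fun N => expTail N r) atTop (𝓝 0) := by
  have h : HasSum (fun d : ℕ => r ^ d / (d.factorial : ℝ)) (Real.exp r) := by
    have := NormedSpace.expSeries_div_hasSum_exp (𝔸 := ℝ) r
    rwa [← Real.exp_eq_exp_ℝ] at this
  have := h.tendsto_sum_nat.const_sub (Real.exp r)
  rwa [sub_self] at this

/-- The real-linear form `x ↦ x_j`, with complex values. -/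
noncomputable def coordC {n : ℕ} (j : Fin n) : (Fin n → ℝ) →L[ℝ] ℂ :=
  Complex.ofRealCLM.comp (ContinuousLinearMap.proj j)

/-- The phase `-2πi ∑ ξ_j x_j`. -/
noncomputable def phase {n : ℕ} (ξ x : Fin n → ℝ) : ℂ :=
  ∑ j, (-2 * Real.pi * Complex.I * (ξ j : ℂ)) * (x j : ℂ)

lemma norm_phase_le {n : ℕ} (ξ x : Fin n → ℝ) :
    ‖phase ξ x‖ ≤ 2 * Real.pi * n * (‖ξ‖ * ‖x‖) := by
  refine (norm_sum_le _ _).trans ?_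
  have : ∀ j ∈ (univ : Finset (Fin n)), ‖(-2 * Real.pi * Complex.I * (ξ j : ℂ)) * (x j : ℂ)‖ ≤
      2 * Real.pi * (‖ξ‖ * ‖x‖) := by
    intro j _
    have h1 := norm_le_pi_norm ξ j
    have h2 := norm_le_pi_norm x j
    have h3 := Real.pi_pos
    simp only [norm_mul, norm_neg, Complex.norm_ofNat, Complex.norm_real, Complex.norm_I]
    rw [Real.norm_of_nonneg Real.pi_pos.le]
    have : ‖ξ j‖ * ‖x j‖ ≤ ‖ξ‖ * ‖x‖ := by gcongr
    nlinarith
  refine (Finset.sum_le_card_nsmul _ _ _ this).trans ?_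
  simp only [Finset.card_univ, Fintype.card_fin, nsmul_eq_mul]
  apply le_of_eq; ring

lemma phase_continuous {n : ℕ} : Continuous fun q : (Fin n → ℝ) × (Fin n → ℝ) => phase q.1 q.2 := by
  unfold phase; fun_prop

lemma phase_hasFDerivAt {n : ℕ} (ξ x : Fin n → ℝ) :
    HasFDerivAt (phase ξ) (∑ j, (-2 * Real.pi * Complex.I * (ξ j : ℂ)) • coordC j) x := by
  have : phase ξ = ⇑(∑ j, (-2 * Real.pi * Complex.I * (ξ j : ℂ)) • coordC (n := n) j) := by
    ext y; simp [phase, coordC]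
  rw [this]
  exact ContinuousLinearMap.hasFDerivAt _

/-- The integral `∫ ψ(ξ) r_N(-2πi ξ·x) dξ` of the remainder `r_N` of the exponential series. For
`N = 0` it is the Fourier transform of `ψ`, in general it is the Fourier transform minus its
Taylor polynomial at the origin. -/
noncomputable def FN {n : ℕ} (N : ℕ) (ψ : (Fin n → ℝ) → ℂ) (x : Fin n → ℝ) : ℂ :=
  ∫ ξ, ψ ξ * expRem N (phase ξ x)

/-- The function `-2πi ξ_j ψ(ξ)`. -/
noncomputable def mulC {n : ℕ} (j : Fin n) (ψ : (Fin n → ℝ) → ℂ) (ξ : Fin n → ℝ) : ℂ :=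
  (-2 * Real.pi * Complex.I * (ξ j : ℂ)) * ψ ξ

lemma mulC_continuous {n : ℕ} (j : Fin n) {ψ : (Fin n → ℝ) → ℂ} (h : Continuous ψ) :
    Continuous (mulC j ψ) := by unfold mulC; fun_prop

lemma mulC_support {n : ℕ} (j : Fin n) {ψ : (Fin n → ℝ) → ℂ} (h : HasCompactSupport ψ) :
    HasCompactSupport (mulC j ψ) := h.mul_left

lemma FN_integrand_continuous {n : ℕ} (N : ℕ) {ψ : (Fin n → ℝ) → ℂ} (hψ : Continuous ψ)
    (x : Fin n → ℝ) : Continuous fun ξ => ψ ξ * expRem N (phase ξ x) :=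
  hψ.mul ((expRem_continuous N).comp (phase_continuous.comp (by fun_prop :
    Continuous fun ξ : Fin n → ℝ => (ξ, x))))

lemma FN_hasFDerivAt {n : ℕ} (N : ℕ) {ψ : (Fin n → ℝ) → ℂ} (hψ : Continuous ψ)
    (hs : HasCompactSupport ψ) (x : Fin n → ℝ) :
    HasFDerivAt (FN N ψ) (∑ j, FN (N - 1) (mulC j ψ) x • coordC j) x := by
  have e : (∑ j, FN (N - 1) (mulC j ψ) x • coordC (n := n) j) =
      ∫ ξ, ∑ j, (mulC j ψ ξ * expRem (N - 1) (phase ξ x)) • coordC (n := n) j := by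
    rw [integral_finsetSum]
    · refine Finset.sum_congr rfl fun j _ => ?_
      rw [integral_smul_const]; rfl
    · intro j _
      exact ((FN_integrand_continuous (N - 1) (mulC_continuous j hψ) x).integrable_of_hasCompactSupport
        (mulC_support j hs).mul_right).smul_const _
  rw [e]
  refine hasFDerivAt_integral_of_dominated_of_fderiv_le (s := Metric.ball x 1)
    (F' := fun x ξ => ∑ j, (mulC j ψ ξ * expRem (N - 1) (phase ξ x)) • coordC (n := n) j)
    (bound := fun ξ => ∑ j, ‖mulC j ψ ξ‖ *
      Real.exp (2 * Real.pi * n * (‖ξ‖ * (‖x‖ + 1))) * ‖coordC (n := n) j‖)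
    (Metric.ball_mem_nhds x one_pos) (.of_forall fun y =>
      (FN_integrand_continuous N hψ y).aestronglyMeasurable)
    ((FN_integrand_continuous N hψ x).integrable_of_hasCompactSupport hs.mul_right) ?_ ?_ ?_ ?_
  · refine Continuous.aestronglyMeasurable ?_
    exact continuous_finsetSum _ fun j _ =>
      (FN_integrand_continuous (N - 1) (mulC_continuous j hψ) x).smul continuous_const
  · refine .of_forall fun ξ y hy => (norm_sum_le _ _).trans (Finset.sum_le_sum fun j _ => ?_)
    rw [norm_smul, norm_mul]
    have hy' : ‖y‖ ≤ ‖x‖ + 1 := by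
      rw [Metric.mem_ball, dist_eq_norm] at hy
      have := norm_le_norm_add_norm_sub' y x
      linarith
    have hr : ‖phase ξ y‖ ≤ 2 * Real.pi * n * (‖ξ‖ * (‖x‖ + 1)) :=
      (norm_phase_le ξ y).trans (by have := Real.pi_pos; gcongr)
    gcongr
    exact (norm_expRem_le _ hr).trans (expTail_le_exp _ ((norm_nonneg _).trans hr))
  · refine integrable_finsetSum _ fun j _ => ?_
    refine Continuous.integrable_of_hasCompactSupport ?_ ?_
    · have := mulC_continuous j hψ
      fun_prop
    · exact ((mulC_support j hs).norm.mul_right).mul_right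
  · refine .of_forall fun ξ y _ => ?_
    have h1 := ((expRem_hasDerivAt N (phase ξ y)).comp_hasFDerivAt y
      (phase_hasFDerivAt ξ y)).const_mul (ψ ξ)
    refine h1.congr_fderiv ?_
    simp only [Finset.smul_sum, smul_smul, mulC]
    refine Finset.sum_congr rfl fun j _ => ?_
    congr 1; ring

lemma FN_fderiv {n : ℕ} (N : ℕ) {ψ : (Fin n → ℝ) → ℂ} (hψ : Continuous ψ)
    (hs : HasCompactSupport ψ) :
    fderiv ℝ (FN N ψ) = fun x => ∑ j, FN (N - 1) (mulC j ψ) x • coordC (n := n) j :=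
  funext fun x => (FN_hasFDerivAt N hψ hs x).fderiv

lemma FN_contDiff {n : ℕ} (m : ℕ) : ∀ (N : ℕ) {ψ : (Fin n → ℝ) → ℂ}, Continuous ψ →
    HasCompactSupport ψ → ContDiff ℝ m (FN N ψ) := by
  induction m with
  | zero =>
    intro N ψ hψ hs
    exact contDiff_zero.2 (continuous_iff_continuousAt.2 fun x =>
      (FN_hasFDerivAt N hψ hs x).continuousAt)
  | succ m ih =>
    intro N ψ hψ hs
    rw [show ((m + 1 : ℕ) : WithTop ℕ∞) = (m : WithTop ℕ∞) + 1 by norm_cast,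
      contDiff_succ_iff_fderiv]
    refine ⟨fun x => (FN_hasFDerivAt N hψ hs x).differentiableAt, by simp, ?_⟩
    rw [FN_fderiv N hψ hs]
    exact ContDiff.sum fun j _ =>
      (ih (N - 1) (mulC_continuous j hψ) (mulC_support j hs)).smul contDiff_const

lemma FN_contDiff_top {n : ℕ} (N : ℕ) {ψ : (Fin n → ℝ) → ℂ} (hψ : Continuous ψ)
    (hs : HasCompactSupport ψ) : ContDiff ℝ (⊤ : ℕ∞) (FN N ψ) :=
  contDiff_infty.2 fun m => FN_contDiff m N hψ hs

lemma norm_iteratedFDeriv_smul_const_le {E V : Type*} [NormedAddCommGroup E] [NormedSpace ℝ E]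
    [NormedAddCommGroup V] [NormedSpace ℝ V] [NormedSpace ℂ V] [IsScalarTower ℝ ℂ V] {m : ℕ}
    {f : E → ℂ} (hf : ContDiff ℝ m f) (c : V) (x : E) :
    ‖iteratedFDeriv ℝ m (fun y => f y • c) x‖ ≤
      ‖(ContinuousLinearMap.id ℝ ℂ).smulRight c‖ * ‖iteratedFDeriv ℝ m f x‖ :=
  ContinuousLinearMap.norm_iteratedFDeriv_comp_left ((ContinuousLinearMap.id ℝ ℂ).smulRight c)
    hf.contDiffAt le_rfl

/-- All derivatives of the Taylor remainders `FN N ψ` tend to `0` uniformly on balls as `N → ∞`.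
Differentiating lowers `N` by one and replaces `ψ` by `mulC j ψ`. -/
lemma FN_bound {n : ℕ} (m : ℕ) : ∀ {ψ : (Fin n → ℝ) → ℂ}, Continuous ψ →
    HasCompactSupport ψ → ∀ B : ℝ, ∃ u : ℕ → ℝ, Tendsto u atTop (𝓝 0) ∧ ∀ N x, ‖x‖ ≤ B →
      ‖iteratedFDeriv ℝ m (FN N ψ) x‖ ≤ u N := by
  induction m with
  | zero =>
    intro ψ hψ hs B
    obtain ⟨M, hM⟩ := hs.isCompact.isBounded.exists_norm_le
    set r := 2 * Real.pi * n * (M * B)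
    refine ⟨fun N => (∫ ξ, ‖ψ ξ‖) * expTail N r, by simpa using (expTail_tendsto r).const_mul _, ?_⟩
    intro N x hx
    rw [norm_iteratedFDeriv_zero]
    beta_reduce
    rw [← integral_mul_const]
    refine norm_integral_le_of_norm_le ?_ (.of_forall fun ξ => ?_)
    · exact (hψ.norm.mul continuous_const).integrable_of_hasCompactSupport hs.norm.mul_right
    · rw [norm_mul]
      by_cases hξ : ξ ∈ tsupport ψ
      · gcongr
        refine norm_expRem_le _ ((norm_phase_le ξ x).trans ?_)
        have h1 := hM ξ hξ
        have := Real.pi_pos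
        have := (norm_nonneg ξ).trans h1
        simp only [r]
        gcongr
      · simp [image_eq_zero_of_notMem_tsupport hξ]
  | succ m ih =>
    intro ψ hψ hs B
    choose u hu hb using fun j => ih (mulC_continuous j hψ) (mulC_support j hs) B
    refine ⟨fun N => ∑ j, ‖(ContinuousLinearMap.id ℝ ℂ).smulRight (coordC (n := n) j)‖ * u j (N - 1),
      ?_, ?_⟩
    · have : Tendsto (fun N : ℕ => N - 1) atTop atTop := tendsto_sub_atTop_nat 1
      have := tendsto_finsetSum univ fun j _ => (((hu j).comp this).const_mul
        ‖(ContinuousLinearMap.id ℝ ℂ).smulRight (coordC (n := n) j)‖)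
      simpa using this
    · intro N x hx
      rw [← norm_iteratedFDeriv_fderiv, FN_fderiv N hψ hs]
      have hc : ∀ j, ContDiff ℝ m (FN (N - 1) (mulC j ψ)) := fun j =>
        FN_contDiff m (N - 1) (mulC_continuous j hψ) (mulC_support j hs)
      have hd : ∀ j, ContDiff ℝ m fun x => FN (N - 1) (mulC j ψ) x • coordC (n := n) j :=
        fun j => (hc j).smul contDiff_const
      rw [iteratedFDeriv_sum fun j _ => hd j, Finset.sum_apply]
      refine (norm_sum_le _ _).trans (Finset.sum_le_sum fun j _ => ?_)
      exact (norm_iteratedFDeriv_smul_const_le (hc j) _ x).trans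
        (mul_le_mul_of_nonneg_left (hb j (N - 1) x hx) (norm_nonneg _))

/-! ### Taylor expansion under `R 0` -/

/-- The pointwise product of two Schwartz functions. -/
noncomputable def mulS {n : ℕ} (G Φ : SchwartzMap (Fin n → ℝ) ℂ) : SchwartzMap (Fin n → ℝ) ℂ :=
  SchwartzMap.smulLeftCLM ℂ (⇑G) Φ

lemma mulS_apply {n : ℕ} (G Φ : SchwartzMap (Fin n → ℝ) ℂ) (x : Fin n → ℝ) :
    mulS G Φ x = G x * Φ x := by
  rw [mulS, SchwartzMap.smulLeftCLM_apply_apply G.hasTemperateGrowth, smul_eq_mul]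

/-- The moments `∫ ψ(ξ) (-2πi ξ·x)^d dξ` are homogeneous polynomials in `x`. -/
lemma exists_moment {n : ℕ} (d : ℕ) : ∀ {ψ : (Fin n → ℝ) → ℂ}, Continuous ψ →
    HasCompactSupport ψ → ∃ p : MvPolynomial (Fin n) ℂ, p.IsHomogeneous d ∧
      ∀ x, ev p x = ∫ ξ, ψ ξ * phase ξ x ^ d := by
  induction d with
  | zero =>
    intro ψ _ _
    exact ⟨MvPolynomial.C (∫ ξ, ψ ξ), MvPolynomial.isHomogeneous_C _ _, by simp [ev]⟩
  | succ d ih =>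
    intro ψ hψ hs
    choose p hp he using fun j => ih (mulC_continuous j hψ) (mulC_support j hs)
    refine ⟨∑ j, MvPolynomial.X j * p j, ?_, fun x => ?_⟩
    · refine MvPolynomial.IsHomogeneous.sum _ _ _ fun j _ => ?_
      rw [add_comm]
      exact (MvPolynomial.isHomogeneous_X _ _).mul (hp j)
    · have h1 : ev (∑ j, MvPolynomial.X j * p j) x = ∑ j, (x j : ℂ) * ev (p j) x := by
        simp [ev]
      rw [h1]
      simp_rw [he, ← integral_const_mul]
      rw [← integral_finsetSum]
      · refine integral_congr_ae (.of_forall fun ξ => ?_)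
        beta_reduce
        rw [pow_succ' (phase ξ x), phase, Finset.sum_mul, Finset.mul_sum]
        refine Finset.sum_congr rfl fun j _ => ?_
        simp only [mulC]
        ring
      · intro j _
        refine Continuous.integrable_of_hasCompactSupport ?_ ?_
        · have h2 := mulC_continuous j hψ
          have h3 : Continuous fun ξ => phase ξ x := phase_continuous.comp (by fun_prop :
            Continuous fun ξ : Fin n → ℝ => (ξ, x))
          fun_prop
        · exact ((mulC_support j hs).mul_right).mul_left

lemma FN_zero_at_zero {n : ℕ} (ψ : (Fin n → ℝ) → ℂ) : FN 0 ψ 0 = ∫ ξ, ψ ξ := by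
  simp [FN, expRem, phase]

/-- The Taylor polynomials of the Fourier transform `FN 0 ψ` are seen by `R 0` only through their
constant term. -/
lemma exists_taylor {n : ℕ} {k : ℝ} (hk : 0 < k) {R : ℂ → (SchwartzMap (Fin n → ℝ) ℂ →L[ℂ] ℂ)}
    (hR : IsRieszFamily n k R) {ψ : (Fin n → ℝ) → ℂ} (hψ : Continuous ψ)
    (hs : HasCompactSupport ψ) (g : GG) (N : ℕ) : ∃ P : MvPolynomial (Fin n) ℂ,
      (∀ x, FN 0 ψ x = FN (N + 1) ψ x + ev P x) ∧
      R 0 (Srep g P) = FN 0 ψ 0 * R 0 (Srep g 1) := by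
  have step : ∀ N x, FN N ψ x = FN (N + 1) ψ x +
      (N.factorial : ℂ)⁻¹ * ∫ ξ, ψ ξ * phase ξ x ^ N := by
    intro N x
    rw [← integral_const_mul]
    unfold FN
    rw [← integral_add]
    · refine integral_congr_ae (.of_forall fun ξ => ?_)
      simp only [expRem, Finset.sum_range_succ]
      ring
    · exact (FN_integrand_continuous (N + 1) hψ x).integrable_of_hasCompactSupport hs.mul_right
    · refine Continuous.integrable_of_hasCompactSupport ?_ hs.mul_right.mul_left
      have h3 : Continuous fun ξ => phase ξ x := phase_continuous.comp (by fun_prop :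
        Continuous fun ξ : Fin n → ℝ => (ξ, x))
      fun_prop
  induction N with
  | zero =>
    refine ⟨MvPolynomial.C (∫ ξ, ψ ξ), fun x => ?_, ?_⟩
    · rw [step 0 x]; simp [ev]
    · rw [FN_zero_at_zero, ← mul_one (MvPolynomial.C _), ← MvPolynomial.smul_eq_C_mul,
        map_smul, map_smul, smul_eq_mul]
  | succ N ih =>
    obtain ⟨P, hP, hT⟩ := ih
    obtain ⟨p, hp, he⟩ := exists_moment (N + 1) hψ hs
    refine ⟨P + ((N + 1).factorial : ℂ)⁻¹ • p, fun x => ?_, ?_⟩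
    · rw [hP x, step (N + 1) x, ← he x]
      simp only [ev, map_add, MvPolynomial.smul_eval]
      ring
    · rw [map_add, map_add, map_smul, map_smul, riesz_poly hk hR N p hp g, smul_zero, add_zero, hT]

/-- If all derivatives of `f_N` tend to `0` uniformly on balls and `G` is a compactly supported
Schwartz function, then `G f_N → 0` in the Schwartz space. -/
lemma tendsto_mul_of_iteratedFDeriv {n : ℕ} (G : SchwartzMap (Fin n → ℝ) ℂ)
    (hG : HasCompactSupport G) (f : ℕ → (Fin n → ℝ) → ℂ) (hf : ∀ N, ContDiff ℝ (⊤ : ℕ∞) (f N))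
    (hb : ∀ (m : ℕ) (B : ℝ), ∃ u : ℕ → ℝ, Tendsto u atTop (𝓝 0) ∧ ∀ N x, ‖x‖ ≤ B →
      ‖iteratedFDeriv ℝ m (f N) x‖ ≤ u N)
    (H : ℕ → SchwartzMap (Fin n → ℝ) ℂ) (hH : ∀ N x, H N x = G x * f N x) :
    Tendsto H atTop (𝓝 0) := by
  rw [(schwartz_withSeminorms ℂ (Fin n → ℝ) ℂ).tendsto_nhds]
  rintro ⟨l, m⟩ ε hε
  obtain ⟨B, hB⟩ := hG.isCompact.isBounded.exists_norm_le
  choose u hu hub using fun m => hb m B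
  set v : ℕ → ℝ := fun N => |B| ^ l * ∑ i ∈ range (m + 1),
    (m.choose i : ℝ) * SchwartzMap.seminorm ℂ 0 i G * |u (m - i) N| with hv
  have hv0 : Tendsto v atTop (𝓝 0) := by
    have := (tendsto_finsetSum (range (m + 1)) fun i _ =>
      (hu (m - i)).abs.const_mul ((m.choose i : ℝ) * SchwartzMap.seminorm ℂ 0 i G)).const_mul
        (|B| ^ l)
    simpa using this
  filter_upwards [hv0.eventually_lt_const hε] with N hN
  rw [sub_zero]
  refine lt_of_le_of_lt ?_ hN
  refine SchwartzMap.seminorm_le_bound ℂ l m (H N) (by positivity) fun x => ?_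
  have hHe : ⇑(H N) = fun x => G x * f N x := funext (hH N)
  by_cases hx : x ∈ tsupport G
  · rw [hHe, hv]
    have hxB := hB x hx
    have h1 : ‖x‖ ≤ |B| := hxB.trans (le_abs_self B)
    have h2 := norm_iteratedFDeriv_mul_le (N := (⊤ : ℕ∞)) (G.smooth ⊤) (hf N) x (n := m)
      (by exact_mod_cast le_top)
    beta_reduce
    gcongr
    refine h2.trans (Finset.sum_le_sum fun i _ => ?_)
    gcongr
    · exact SchwartzMap.norm_iteratedFDeriv_le_seminorm ℂ G i x
    · exact (hub (m - i) N x hxB).trans (le_abs_self _)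
  · have : iteratedFDeriv ℝ m (H N) x = 0 := by
      by_contra hne
      have h1 := subset_tsupport _ |>.trans (tsupport_iteratedFDeriv_subset (𝕜 := ℝ) (f := H N) m)
        (Function.mem_support.2 hne)
      rw [hHe] at h1
      exact hx (tsupport_mul_subset_left h1)
    rw [this, norm_zero, mul_zero]
    positivity

/-- `R 0 (G φ) = φ(0) R 0 G` for `G = g(∑ xᵢ)` near the orthant and `φ` the Fourier transform of a
compactly supported function. -/
lemma riesz_fourier {n : ℕ} {k : ℝ} (hk : 0 < k) {R : ℂ → (SchwartzMap (Fin n → ℝ) ℂ →L[ℂ] ℂ)}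
    (hR : IsRieszFamily n k R) {ψ : (Fin n → ℝ) → ℂ} (hψ : Continuous ψ)
    (hs : HasCompactSupport ψ) (g : GG) (Φ : SchwartzMap (Fin n → ℝ) ℂ)
    (hΦ : ∀ x, Φ x = FN 0 ψ x) :
    R 0 (mulS (Srep g 1) Φ) = Φ 0 * R 0 (Srep g 1) := by
  choose P hP hT using exists_taylor hk hR hψ hs g
  have hlim := tendsto_mul_of_iteratedFDeriv (Srep g 1) (Srep_support 1 g)
    (fun N => FN (N + 1) ψ) (fun N => FN_contDiff_top _ hψ hs) (fun m B => by
      obtain ⟨u, hu, hb⟩ := FN_bound m hψ hs B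
      exact ⟨fun N => u (N + 1), hu.comp (tendsto_add_atTop_nat 1), fun N x hx => hb _ x hx⟩)
    (fun N => mulS (Srep g 1) Φ - Srep g (P N)) (fun N x => by
      rw [sub_apply, mulS_apply, hΦ, hP N x, Srep_apply, Srep_apply]
      simp only [ev, map_one]
      ring)
  have h2 := ((R 0).continuous.tendsto 0).comp hlim
  have h3 : (⇑(R 0) ∘ fun N => mulS (Srep g 1) Φ - Srep g (P N)) =
      fun _ => R 0 (mulS (Srep g 1) Φ) - Φ 0 * R 0 (Srep g 1) := by
    funext N
    rw [Function.comp_apply, map_sub, hT N, hΦ 0]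
  rw [h3, map_zero (R 0)] at h2
  exact sub_eq_zero.1 (tendsto_nhds_unique tendsto_const_nhds h2)

/-! ### Density and conclusion -/

/-- The dilation `x ↦ G(x / (N + 1))`. -/
noncomputable def dil {n : ℕ} (G : SchwartzMap (Fin n → ℝ) ℂ) (N : ℕ) :
    SchwartzMap (Fin n → ℝ) ℂ :=
  SchwartzMap.compCLMOfContinuousLinearEquiv ℂ
    (ContinuousLinearEquiv.smulLeft (Units.mk0 ((N : ℝ) + 1)⁻¹ (by positivity))) G

lemma dil_apply {n : ℕ} (G : SchwartzMap (Fin n → ℝ) ℂ) (N : ℕ) (x : Fin n → ℝ) :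
    dil G N x = G (((N : ℝ) + 1)⁻¹ • x) := rfl

lemma dil_support {n : ℕ} {G : SchwartzMap (Fin n → ℝ) ℂ} (hG : HasCompactSupport ⇑G) (N : ℕ) :
    HasCompactSupport ⇑(dil G N) := by
  have h : ((N : ℝ) + 1)⁻¹ ≠ 0 := by positivity
  have h1 : ⇑(dil G N) = fun x => G (((N : ℝ) + 1)⁻¹ • x) := rfl
  rw [h1]
  exact hG.comp_smul h

/-- If `G = 1` near the origin then `G(x / N) φ(x) → φ(x)` in the Schwartz space. -/
lemma dil_tendsto {n : ℕ} (G : SchwartzMap (Fin n → ℝ) ℂ) {δ : ℝ} (hδ : 0 < δ)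
    (hG : ∀ x, ‖x‖ ≤ δ → G x = 1) (Φ : SchwartzMap (Fin n → ℝ) ℂ) :
    Tendsto (fun N => mulS (dil G N) Φ) atTop (𝓝 Φ) := by
  rw [(schwartz_withSeminorms ℂ (Fin n → ℝ) ℂ).tendsto_nhds]
  rintro ⟨l, m⟩ ε hε
  have hFsm : ContDiff ℝ (⊤ : ℕ∞) (fun x => G x - 1) := (G.smooth ⊤).sub contDiff_const
  have hFb : ∀ i : ℕ, ∃ C : ℝ, 0 ≤ C ∧ ∀ x, ‖iteratedFDeriv ℝ i (fun x => G x - 1) x‖ ≤ C := by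
    intro i
    refine ⟨SchwartzMap.seminorm ℂ 0 i G + 1, by positivity, fun x => ?_⟩
    have h1 : iteratedFDeriv ℝ i (fun x => G x - 1) x =
        iteratedFDeriv ℝ i G x - iteratedFDeriv ℝ i (fun _ : Fin n → ℝ => (1 : ℂ)) x :=
      fun_iteratedFDeriv_sub_apply ((G.smooth i).contDiffAt) contDiffAt_const
    rw [h1]
    refine (norm_sub_le _ _).trans (add_le_add (SchwartzMap.norm_iteratedFDeriv_le_seminorm ℂ G i x) ?_)
    rcases Nat.eq_zero_or_pos i with rfl | hi
    · simp [norm_iteratedFDeriv_zero]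
    · rw [iteratedFDeriv_const_of_ne hi.ne']; simp
  choose C hC0 hC using hFb
  set K : ℝ := ∑ i ∈ range (m + 1), (m.choose i : ℝ) * C i * SchwartzMap.seminorm ℂ (l + 1) (m - i) Φ
    with hK
  have hK0 : 0 ≤ K := by
    refine Finset.sum_nonneg fun i _ => ?_
    have := hC0 i
    positivity
  have hv0 : Tendsto (fun N : ℕ => (K / δ) * (1 / ((N : ℝ) + 1))) atTop (𝓝 0) := by
    simpa using (tendsto_one_div_add_atTop_nhds_zero_nat (𝕜 := ℝ)).const_mul (K / δ)
  filter_upwards [hv0.eventually_lt_const hε] with N hN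
  refine lt_of_le_of_lt ?_ hN
  have hN0 : (0 : ℝ) < N + 1 := by positivity
  refine SchwartzMap.seminorm_le_bound ℂ l m _ (by positivity) fun x => ?_
  have hHe : ⇑(mulS (dil G N) Φ - Φ) = fun x => (G (((N : ℝ) + 1)⁻¹ • x) - 1) * Φ x := by
    funext y
    rw [sub_apply, mulS_apply, dil_apply]
    ring
  rw [hHe]
  by_cases hx : ‖x‖ < δ * (N + 1)
  · have h0 : (fun x => (G (((N : ℝ) + 1)⁻¹ • x) - 1) * Φ x) =ᶠ[𝓝 x] fun _ => 0 := by
      have : ∀ᶠ y in 𝓝 x, ‖y‖ < δ * (N + 1) :=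
        continuous_norm.continuousAt.eventually_lt_const hx
      filter_upwards [this] with y hy
      rw [hG, sub_self, zero_mul]
      rw [norm_smul, norm_inv, Real.norm_of_nonneg hN0.le, inv_mul_le_iff₀ hN0]
      linarith
    rw [(h0.iteratedFDeriv ℝ m).eq_of_nhds]
    simp only [iteratedFDeriv_fun_zero, Pi.zero_apply, norm_zero, mul_zero]
    positivity
  · push Not at hx
    have hx0 : 0 < ‖x‖ := lt_of_lt_of_le (by positivity) hx
    have hf : ContDiff ℝ (⊤ : ℕ∞) fun x : Fin n → ℝ => G (((N : ℝ) + 1)⁻¹ • x) - 1 :=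
      hFsm.comp (contDiff_const_smul _)
    have h2 := norm_iteratedFDeriv_mul_le (N := (⊤ : ℕ∞)) hf (Φ.smooth ⊤) x (n := m)
      (by exact_mod_cast le_top)
    have h3 : ∀ i ∈ range (m + 1), (m.choose i : ℝ) *
        ‖iteratedFDeriv ℝ i (fun x : Fin n → ℝ => G (((N : ℝ) + 1)⁻¹ • x) - 1) x‖ *
        ‖iteratedFDeriv ℝ (m - i) Φ x‖ ≤
        ((m.choose i : ℝ) * C i * SchwartzMap.seminorm ℂ (l + 1) (m - i) Φ) / ‖x‖ ^ (l + 1) := by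
      intro i _
      rw [mul_div_assoc]
      have ha : ‖iteratedFDeriv ℝ i (fun x : Fin n → ℝ => G (((N : ℝ) + 1)⁻¹ • x) - 1) x‖ ≤ C i := by
        have e := congrFun (iteratedFDeriv_comp_const_smul (i := i) (((N : ℝ) + 1)⁻¹)
          (hFsm.of_le (by exact_mod_cast le_top))) x
        rw [e, norm_smul]
        refine (mul_le_of_le_one_left (norm_nonneg _) ?_).trans (hC i _)
        rw [norm_pow, norm_inv, Real.norm_of_nonneg hN0.le]
        refine pow_le_one₀ (by positivity) (inv_le_one_of_one_le₀ ?_)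
        have : (0 : ℝ) ≤ N := by positivity
        linarith
      have hb : ‖iteratedFDeriv ℝ (m - i) Φ x‖ ≤
          SchwartzMap.seminorm ℂ (l + 1) (m - i) Φ / ‖x‖ ^ (l + 1) := by
        rw [le_div_iff₀ (by positivity), mul_comm]
        exact SchwartzMap.le_seminorm ℂ (l + 1) (m - i) Φ x
      have := hC0 i
      gcongr
    calc _ ≤ ‖x‖ ^ l * (K / ‖x‖ ^ (l + 1)) := by
          refine mul_le_mul_of_nonneg_left (h2.trans ((Finset.sum_le_sum h3).trans ?_)) (by positivity)
          rw [hK, Finset.sum_div]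
      _ = K / ‖x‖ := by
          rw [pow_succ]
          field_simp
      _ ≤ K / (δ * (N + 1)) := by gcongr
      _ = _ := by field_simp

/-- A cutoff function on the line: `1` on `(-∞, 1]` and `0` on `[2, ∞)`. -/
noncomputable def gcut : GG where
  fn s := (Real.smoothTransition (2 - s) : ℂ)
  smooth := Complex.ofRealCLM.contDiff.comp
    (Real.smoothTransition.contDiff.comp (contDiff_const.sub contDiff_id))
  vanish := ⟨2, fun s hs => by
    rw [Real.smoothTransition.zero_of_nonpos (by linarith), Complex.ofReal_zero]⟩

/-- The function `s ↦ g(s / (N + 1))`. -/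
noncomputable def GG.dil (g : GG) (N : ℕ) : GG where
  fn s := g.fn (((N : ℝ) + 1)⁻¹ * s)
  smooth := g.smooth.comp (contDiff_const.mul contDiff_id)
  vanish := by
    obtain ⟨B, hB⟩ := g.vanish
    have : (0 : ℝ) < N + 1 := by positivity
    exact ⟨(N + 1) * B, fun s hs => hB _ (by rwa [le_inv_mul_iff₀ this])⟩

lemma gcut_one {n : ℕ} {x : Fin n → ℝ} (hx : ‖x‖ ≤ ((n : ℝ) + 1)⁻¹) : Srep gcut 1 x = 1 := by
  have hn : (0 : ℝ) < n + 1 := by positivity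
  have h : ∀ i, |x i| ≤ ((n : ℝ) + 1)⁻¹ := fun i => (norm_le_pi_norm x i).trans hx
  have h1 : ((n : ℝ) + 1)⁻¹ ≤ 1 := inv_le_one_of_one_le₀ (by linarith [(n.cast_nonneg : (0:ℝ) ≤ n)])
  have hsum : ∑ i, x i ≤ 1 := by
    refine (Finset.sum_le_card_nsmul _ _ ((n : ℝ) + 1)⁻¹ fun i _ => (le_abs_self _).trans (h i)).trans ?_
    rw [Finset.card_univ, Fintype.card_fin, nsmul_eq_mul, ← div_eq_mul_inv, div_le_one hn]
    linarith
  rw [Srep_apply, cutI_eq_one fun i => by linarith [neg_abs_le (x i), h i]]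
  simp only [gcut]
  rw [Real.smoothTransition.one_of_one_le (by linarith)]
  simp [ev]

/-- On the orthant the dilation of the cutoff `Srep gcut 1` is the cutoff built from the dilated `gcut`;
the two differ elsewhere because `cutI` is not dilated, but `R 0` does not see this. -/
lemma riesz_dil {n : ℕ} {k : ℝ} (hk : 0 < k) {R : ℂ → (SchwartzMap (Fin n → ℝ) ℂ →L[ℂ] ℂ)}
    (hR : IsRieszFamily n k R) (N : ℕ) (Φ : SchwartzMap (Fin n → ℝ) ℂ) :
    R 0 (mulS (dil (Srep gcut 1) N) Φ) = R 0 (mulS (Srep (gcut.dil N) 1) Φ) := by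
  rw [← sub_eq_zero, ← map_sub]
  refine riesz_zero_of_vanish hk hR fun x hx => ?_
  have hN : (0 : ℝ) < ((N : ℝ) + 1)⁻¹ := by positivity
  have hx' : (((N : ℝ) + 1)⁻¹ • x) ∈ Rplus n := fun i => mul_pos hN (hx i)
  rw [sub_apply, mulS_apply, mulS_apply, dil_apply, Srep_Rplus _ _ hx, Srep_Rplus _ _ hx']
  simp only [GG.dil, Pi.smul_apply, smul_eq_mul, ← Finset.mul_sum, ev, map_one, one_mul, sub_self]

/-- The factors `R 0 (Srep (gcut.dil N) 1)` in `riesz_fourier` are not known to converge, so they are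
eliminated by comparing two functions. -/
lemma riesz_fourier_pair {n : ℕ} {k : ℝ} (hk : 0 < k)
    {R : ℂ → (SchwartzMap (Fin n → ℝ) ℂ →L[ℂ] ℂ)} (hR : IsRieszFamily n k R)
    {ψ₁ ψ₂ : (Fin n → ℝ) → ℂ} (h1 : Continuous ψ₁) (hs1 : HasCompactSupport ψ₁)
    (h2 : Continuous ψ₂) (hs2 : HasCompactSupport ψ₂) (Φ₁ Φ₂ : SchwartzMap (Fin n → ℝ) ℂ)
    (hΦ₁ : ∀ x, Φ₁ x = FN 0 ψ₁ x) (hΦ₂ : ∀ x, Φ₂ x = FN 0 ψ₂ x) :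
    Φ₂ 0 * R 0 Φ₁ = Φ₁ 0 * R 0 Φ₂ := by
  have hlim : ∀ Φ, Tendsto (fun N => R 0 (mulS (dil (Srep gcut 1) N) Φ)) atTop (𝓝 (R 0 Φ)) :=
    fun Φ => ((R 0).continuous.tendsto Φ).comp
      (dil_tendsto _ (by positivity) (fun x hx => gcut_one hx) Φ)
  refine tendsto_nhds_unique ((hlim Φ₁).const_mul (Φ₂ 0)) ?_
  refine ((hlim Φ₂).const_mul (Φ₁ 0)).congr fun N => ?_
  rw [riesz_dil hk hR, riesz_dil hk hR, riesz_fourier hk hR h1 hs1 _ _ hΦ₁,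
    riesz_fourier hk hR h2 hs2 _ _ hΦ₂]
  ring

open FourierTransform in
/-- Fourier transforms of compactly supported continuous functions are sequentially dense in the
Schwartz space. -/
lemma exists_fourier_seq {n : ℕ} (φ : SchwartzMap (Fin n → ℝ) ℂ) :
    ∃ (Φ : ℕ → SchwartzMap (Fin n → ℝ) ℂ) (ψ : ℕ → (Fin n → ℝ) → ℂ),
      (∀ N, Continuous (ψ N)) ∧ (∀ N, HasCompactSupport (ψ N)) ∧
      (∀ N x, Φ N x = FN 0 (ψ N) x) ∧ Tendsto Φ atTop (𝓝 φ) := by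
  set E := EuclideanSpace.equiv (Fin n) ℝ
  set A := SchwartzMap.compCLMOfContinuousLinearEquiv (F := ℂ) ℂ E with hA
  set A' := SchwartzMap.compCLMOfContinuousLinearEquiv (F := ℂ) ℂ E.symm with hA'
  set χ : SchwartzMap (Fin n → ℝ) ℂ := A' (𝓕⁻ (A φ)) with hχ
  have hφ : A' (𝓕 (A χ)) = φ := by
    have h1 : A χ = 𝓕⁻ (A φ) := by
      ext x; simp [hχ, hA, hA']
    rw [h1, fourier_fourierInv_eq]
    ext x; simp [hA, hA']
  have hFc : Continuous fun f : SchwartzMap (EuclideanSpace ℝ (Fin n)) ℂ => 𝓕 f := by fun_prop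
  refine ⟨fun N => A' (𝓕 (A (mulS (dil (Srep gcut 1) N) χ))),
    fun N => mulS (dil (Srep gcut 1) N) χ, fun N => SchwartzMap.continuous _, fun N => ?_,
    fun N x => ?_, ?_⟩
  · have h : ⇑(mulS (dil (Srep gcut 1) N) χ) = fun x => dil (Srep gcut 1) N x * χ x :=
      funext fun x => mulS_apply _ _ x
    beta_reduce
    rw [h]
    refine HasCompactSupport.mul_right ?_
    exact dil_support (G := Srep gcut 1) (Srep_support 1 gcut) N
  · set f := mulS (dil (Srep gcut 1) N) χ
    have h1 : A' (𝓕 (A f)) x = 𝓕 (fun v => f (E v)) (E.symm x) := rfl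
    rw [h1, Real.fourier_eq', FN, ← (PiLp.volume_preserving_ofLp (Fin n)).integral_comp
      (MeasurableEquiv.toLp 2 (Fin n → ℝ)).symm.measurableEmbedding]
    refine integral_congr_ae (.of_forall fun v => ?_)
    simp only [expRem, phase, Finset.range_zero, Finset.sum_empty, sub_zero, smul_eq_mul]
    rw [mul_comm]
    congr 2
    rw [PiLp.inner_apply]
    push_cast
    rw [Finset.mul_sum, Finset.sum_mul]
    refine Finset.sum_congr rfl fun j _ => ?_
    simp [E]
    ring
  · have := ((A'.continuous.comp (hFc.comp A.continuous)).tendsto χ).comp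
      (dil_tendsto _ (by positivity) (fun x hx => gcut_one hx) χ)
    rw [Function.comp_apply, Function.comp_apply, hφ] at this
    exact this

/-- `riesz_fourier_pair` extended to all Schwartz functions by density. -/
lemma riesz_pair {n : ℕ} {k : ℝ} (hk : 0 < k)
    {R : ℂ → (SchwartzMap (Fin n → ℝ) ℂ →L[ℂ] ℂ)} (hR : IsRieszFamily n k R)
    (φ₁ φ₂ : SchwartzMap (Fin n → ℝ) ℂ) : φ₂ 0 * R 0 φ₁ = φ₁ 0 * R 0 φ₂ := by
  obtain ⟨Φ₁, ψ₁, h1, hs1, hΦ₁, ht1⟩ := exists_fourier_seq φ₁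
  obtain ⟨Φ₂, ψ₂, h2, hs2, hΦ₂, ht2⟩ := exists_fourier_seq φ₂
  have hev : Continuous fun Φ : SchwartzMap (Fin n → ℝ) ℂ => Φ 0 := by
    have h := (SchwartzMap.toBoundedContinuousFunctionCLM ℂ (Fin n → ℝ) ℂ).continuous
    exact (continuous_eval_const (F := BoundedContinuousFunction (Fin n → ℝ) ℂ) 0).comp h
  have l1 := ((hev.tendsto φ₂).comp ht2).mul (((R 0).continuous.tendsto φ₁).comp ht1)
  have l2 := ((hev.tendsto φ₁).comp ht1).mul (((R 0).continuous.tendsto φ₂).comp ht2)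
  exact tendsto_nhds_unique l1 (l2.congr fun N =>
    (riesz_fourier_pair hk hR (h1 N) (hs1 N) (h2 N) (hs2 N) _ _ (hΦ₁ N) (hΦ₂ N)).symm)

/-- The Riesz distribution at `μ = 0` is the Dirac measure at the origin:
`⟨R_0, φ⟩ = φ(0)` for every Schwartz `φ`. -/
theorem riesz_zero_eq_dirac (n : ℕ) (hn : 2 ≤ n) (k : ℝ) (hk : 0 < k)
    (R : ℂ → (SchwartzMap (Fin n → ℝ) ℂ →L[ℂ] ℂ)) (hR : IsRieszFamily n k R)
    (φ : SchwartzMap (Fin n → ℝ) ℂ) :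
    R 0 φ = φ 0 := by
  obtain ⟨e, he, he0⟩ := exists_expSchwartz n
  have h := riesz_pair hk hR φ e
  rwa [he0, one_mul, riesz_zero_exp hk hR he, mul_one] at h
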